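/- Let A and B be convex polyhedral cones in ℝ³ with apex the origin O and non-empty interior such that A, −B ⊂ {x : x₃ ≥ 0} and A ∩ {x₃ = 0} = B ∩ {x₃ = 0} = {O}. Let S³(A,B) = cl{x ∈ ℝ³ : g_{A,B} fails to be of class C³ at x} and E(A,B) = ⋃{R + T : R is an edge of A and T is an edge of −B}. Then E(A,B) ⊂ S³(A,B) ⊂ ∂A ∪ (−∂B) ∪ E(A,B). -/

import Mathlib

open MeasureTheory Pointwise

/-- The cross covariogram of sets `K, L ⊆ ℝ³`: `g_{K,L}(x) = λ₃(K ∩ (L + x))`. -/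
noncomputable def crossCovariogram (K L : Set (EuclideanSpace ℝ (Fin 3)))
    (x : EuclideanSpace ℝ (Fin 3)) : ℝ :=
  (volume (K ∩ ((x + ·) '' L))).toReal

/-- A convex polyhedral cone with apex the origin: a finite intersection of closed
half-spaces whose boundary planes pass through the origin. -/
def IsPolyhedralCone (C : Set (EuclideanSpace ℝ (Fin 3))) : Prop :=
  ∃ S : Finset (EuclideanSpace ℝ (Fin 3)),
    C = {x | ∀ s ∈ S, @inner ℝ _ _ s x ≤ (0 : ℝ)}

/-- The exposed face of a convex set `Q` in direction `w`. -/
def exposedFace (Q : Set (EuclideanSpace ℝ (Fin 3)))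
    (w : EuclideanSpace ℝ (Fin 3)) : Set (EuclideanSpace ℝ (Fin 3)) :=
  {x ∈ Q | ∀ y ∈ Q, @inner ℝ _ _ w y ≤ @inner ℝ _ _ w x}

/-- `S` is an edge (a one-dimensional exposed face) of `Q`. -/
def IsEdgeOf (Q S : Set (EuclideanSpace ℝ (Fin 3))) : Prop :=
  (∃ w : EuclideanSpace ℝ (Fin 3), w ≠ 0 ∧ S = exposedFace Q w) ∧
    Module.finrank ℝ (vectorSpan ℝ S) = 1

/-- `f` is of class `C³` at `x`: it is three times continuously differentiable on some
neighbourhood of `x`. -/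
def IsC3At (f : EuclideanSpace ℝ (Fin 3) → ℝ) (x : EuclideanSpace ℝ (Fin 3)) : Prop :=
  ∃ U ∈ nhds x, ContDiffOn ℝ 3 f U

/-!
`g_{A,B}` is the convolution of the indicators of `A` and `-B`, and its germ at `x` is governed by
the pairs `y + z = x` with `y ∈ A` and `z ∈ -B`.

*Upper bound.* Near `y` and `z` the two cones coincide with translates of their tangent cones, which
are invariant under their lineality spaces. Where these two spaces span `ℝ³`, the convolution is
locally smooth. Pairs for which they do not span force `x` onto one of the boundaries or onto a sum
of two edges.

*Lower bound.* Let `x` be a generic point of the sum of an edge along `r` and an edge along `t`. If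
a facet of one cone lies in the plane of `r` and `t`, replace its indicator by the difference with a
small translate along this facet, which cancels the jump across it. Every local contribution is
then, modulo smooth functions and up to a common sign, nonnegative and zero on one side of that
plane, while the contribution of the two edges grows at least cubically on the other side. By
Taylor's theorem the sum is not `C³` at `x`. The other points follow since the `C³` points are open.
-/

open Module Set Submodule
open scoped InnerProductSpace ContDiff Topology ENNReal

section LocalConvolution

/-- `f` is constant along the translates of `L`. -/
def InvariantUnder {E : Type*} [AddCommGroup E] [Module ℝ E] (f : E → ℝ) (L : Submodule ℝ E) :
    Prop :=
  ∀ p, ∀ v ∈ L, f (p + v) = f p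

theorem InvariantUnder.comp_sub_right {E : Type*} [AddCommGroup E] [Module ℝ E] {f : E → ℝ}
    {L : Submodule ℝ E} (hf : InvariantUnder f L) (a : E) : InvariantUnder (fun p => f (p - a)) L :=
  fun p v hv => by simp only [add_sub_right_comm, hf _ v hv]

theorem exists_projection_of_sup_eq_top {E : Type*} [NormedAddCommGroup E] [NormedSpace ℝ E]
    [FiniteDimensional ℝ E] {L M : Submodule ℝ E} (hLM : L ⊔ M = ⊤) :
    ∃ P : E →L[ℝ] E, ∀ x, P x ∈ L ∧ x - P x ∈ M := by
  obtain ⟨g, hg⟩ := (L.subtype.coprod M.subtype).exists_rightInverse_of_surjective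
    (by rw [LinearMap.range_coprod, range_subtype, range_subtype, hLM])
  have hsplit (x : E) : x = ((g x).1 : E) + (g x).2 := by simpa using congr($hg.symm x)
  refine ⟨(L.subtype ∘ₗ LinearMap.fst ℝ L M ∘ₗ g).toContinuousLinearMap,
    fun x => ⟨(g x).1.2, ?_⟩⟩
  have hsnd : x - ((g x).1 : E) = (g x).2 := sub_eq_of_eq_add' (hsplit x)
  exact hsnd ▸ (g x).2.2

variable {E : Type*} [NormedAddCommGroup E] [InnerProductSpace ℝ E] [FiniteDimensional ℝ E]
  [MeasurableSpace E] [BorelSpace E]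

/-- The part of the convolution `f * h` contributed by the points `p` weighted by `φ`; for
`φ = 1` it is the convolution itself. -/
noncomputable def localConv (φ f h : E → ℝ) (x : E) : ℝ := ∫ p, φ p * (f p * h (x - p))

/-- The test functions by which convolutions are localized. -/
structure IsCutoff (φ : E → ℝ) : Prop where
  smooth : ContDiff ℝ ∞ φ
  hasCompactSupport : HasCompactSupport φ
  nonneg : ∀ p, 0 ≤ φ p

variable {φ f g h : E → ℝ}

theorem memLp_top_comp_sub_right (hf : MemLp f ∞) (a : E) : MemLp (fun p => f (p - a)) ∞ :=
  hf.comp_measurePreserving (measurePreserving_sub_right volume a)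

theorem memLp_top_comp_sub_left (hf : MemLp f ∞) (a : E) : MemLp (fun p => f (a - p)) ∞ :=
  hf.comp_measurePreserving (Measure.measurePreserving_sub_left volume a)

theorem IsCutoff.integrable_mul (hφ : IsCutoff φ) (hf : MemLp f ∞) :
    Integrable fun p => φ p * f p :=
  MemLp.integrable_mul (p := 1) (q := ∞)
    (hφ.smooth.continuous.memLp_of_hasCompactSupport hφ.hasCompactSupport) hf

theorem integrable_localConv (hφ : IsCutoff φ) (hf : MemLp f ∞) (hh : MemLp h ∞) (x : E) :
    Integrable fun p => φ p * (f p * h (x - p)) :=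
  hφ.integrable_mul ((memLp_top_comp_sub_left hh x).mul' hf)

theorem localConv_add_left (hφ : IsCutoff φ) (hf : MemLp f ∞) (hg : MemLp g ∞)
    (hh : MemLp h ∞) : localConv φ (f + g) h = localConv φ f h + localConv φ g h := by
  ext x
  simp only [localConv, Pi.add_apply]
  rw [← integral_add (integrable_localConv hφ hf hh x) (integrable_localConv hφ hg hh x)]
  simp only [add_mul, mul_add]

theorem localConv_add_right (hφ : IsCutoff φ) (hf : MemLp f ∞) (hg : MemLp g ∞)
    (hh : MemLp h ∞) : localConv φ f (g + h) = localConv φ f g + localConv φ f h := by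
  ext x
  simp only [localConv, Pi.add_apply]
  rw [← integral_add (integrable_localConv hφ hf hg x) (integrable_localConv hφ hf hh x)]
  simp only [mul_add]

theorem localConv_smul_left (φ f h : E → ℝ) (c : ℝ) :
    localConv φ (c • f) h = c • localConv φ f h := by
  ext x
  simp only [localConv, Pi.smul_apply, smul_eq_mul, ← integral_const_mul]
  congr with p
  ring

theorem localConv_smul_right (φ f h : E → ℝ) (c : ℝ) :
    localConv φ f (c • h) = c • localConv φ f h := by
  ext x
  simp only [localConv, Pi.smul_apply, smul_eq_mul, ← integral_const_mul]
  congr with p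
  ring

theorem localConv_nonneg (hφ : IsCutoff φ) (hf : ∀ p, 0 ≤ f p) (hh : ∀ p, 0 ≤ h p) (x : E) :
    0 ≤ localConv φ f h x :=
  integral_nonneg fun p => mul_nonneg (hφ.nonneg p) (mul_nonneg (hf p) (hh _))

theorem localConv_eq_zero_of_inner_neg {n : E} (hf : ∀ p, ⟪n, p⟫_ℝ < 0 → f p = 0)
    (hh : ∀ p, ⟪n, p⟫_ℝ < 0 → h p = 0) {x : E} (hx : ⟪n, x⟫_ℝ < 0) : localConv φ f h x = 0 := by
  refine integral_eq_zero_of_ae (.of_forall fun p => ?_)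
  rcases lt_or_ge ⟪n, p⟫_ℝ 0 with hp | hp
  · simp [hf p hp]
  · have : ⟪n, x - p⟫_ℝ < 0 := by rw [inner_sub_right]; linarith
    simp [hh _ this]

theorem contDiff_integral_comp_add_mul (hφ : IsCutoff φ) (hf : MemLp f ∞) :
    ContDiff ℝ ∞ fun v => ∫ q, φ (q + v) * f q := by
  have hsupp : HasCompactSupport fun x => φ (-x) :=
    hφ.hasCompactSupport.comp_homeomorph (Homeomorph.neg E)
  have hconv := hsupp.contDiff_convolution_right (ContinuousLinearMap.mul ℝ ℝ) (n := ⊤)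
    (hf.locallyIntegrable le_top) (hφ.smooth.comp contDiff_neg)
  convert hconv.comp contDiff_neg using 2 with v
  simp [convolution, mul_comm, add_comm]

theorem contDiff_localConv_of_invariantUnder (hφ : IsCutoff φ) (hf : MemLp f ∞)
    (hh : MemLp h ∞) {L M : Submodule ℝ E} (hfL : InvariantUnder f L) (hhM : InvariantUnder h M)
    (hLM : L ⊔ M = ⊤) : ContDiff ℝ ∞ (localConv φ f h) := by
  obtain ⟨P, hP⟩ := exists_projection_of_sup_eq_top hLM
  -- Translating `p` by `P x` moves the whole dependence on `x` into the smooth factor `φ`.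
  have hshift (x : E) : localConv φ f h x = ∫ q, φ (q + P x) * (f q * h (0 - q)) := by
    rw [localConv, ← integral_add_right_eq_self _ (P x)]
    congr with q
    rw [hfL q _ (hP x).1, show x - (q + P x) = 0 - q + (x - P x) by abel, hhM _ _ (hP x).2]
  rw [funext hshift]
  exact (contDiff_integral_comp_add_mul hφ ((memLp_top_comp_sub_left hh 0).mul' hf)).comp
    P.contDiff

/-- Finite sums of bounded functions, each invariant under some member of `𝓜`. -/
def invariantSums (𝓜 : Set (Submodule ℝ E)) : Submodule ℝ (E → ℝ) :=
  span ℝ {f | MemLp f ∞ ∧ ∃ M ∈ 𝓜, InvariantUnder f M}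

theorem mem_invariantSums {𝓜 : Set (Submodule ℝ E)} {M : Submodule ℝ E} (hM : M ∈ 𝓜)
    (hf : MemLp f ∞) (hfM : InvariantUnder f M) : f ∈ invariantSums 𝓜 :=
  subset_span ⟨hf, M, hM, hfM⟩

theorem memLp_top_of_mem_invariantSums {𝓜 : Set (Submodule ℝ E)} (hf : f ∈ invariantSums 𝓜) :
    MemLp f ∞ := by
  induction hf using span_induction with
  | mem f hf => exact hf.1
  | zero => exact MemLp.zero
  | add f g _ _ hf hg => exact hf.add hg
  | smul c f _ hf => exact hf.const_smul c

theorem contDiff_localConv_of_mem_invariantSums {𝓜 𝓛 : Set (Submodule ℝ E)}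
    (h𝓜𝓛 : ∀ M ∈ 𝓜, ∀ N ∈ 𝓛, M ⊔ N = ⊤) (hf : f ∈ invariantSums 𝓜) (hh : h ∈ invariantSums 𝓛)
    (hφ : IsCutoff φ) : ContDiff ℝ ∞ (localConv φ f h) := by
  unfold invariantSums at hf hh
  induction hf, hh using span_induction₂ with
  | mem_mem f h hf hh =>
    obtain ⟨⟨hf, M, hM, hfM⟩, hh, N, hN, hhN⟩ := And.intro hf hh
    exact contDiff_localConv_of_invariantUnder hφ hf hh hfM hhN (h𝓜𝓛 M hM N hN)
  | zero_left h _ =>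
    convert contDiff_const (c := (0 : ℝ)) with x
    simp [localConv]
  | zero_right f _ =>
    convert contDiff_const (c := (0 : ℝ)) with x
    simp [localConv]
  | add_left f g h hf hg hh h₁ h₂ =>
    rw [localConv_add_left hφ (memLp_top_of_mem_invariantSums (𝓜 := 𝓜) hf)
      (memLp_top_of_mem_invariantSums (𝓜 := 𝓜) hg) (memLp_top_of_mem_invariantSums (𝓜 := 𝓛) hh)]
    exact h₁.add h₂
  | add_right f g h hf hg hh h₁ h₂ =>
    rw [localConv_add_right hφ (memLp_top_of_mem_invariantSums (𝓜 := 𝓜) hf)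
      (memLp_top_of_mem_invariantSums (𝓜 := 𝓛) hg) (memLp_top_of_mem_invariantSums (𝓜 := 𝓛) hh)]
    exact h₁.add h₂
  | smul_left c f h _ _ h₁ => exact localConv_smul_left φ f h c ▸ contDiff_const.smul h₁
  | smul_right c f h _ _ h₁ => exact localConv_smul_right φ f h c ▸ contDiff_const.smul h₁

end LocalConvolution

section OneSided

variable {E : Type*} [NormedAddCommGroup E] [InnerProductSpace ℝ E]

/-- The functions that differ, near `x₀`, from a smooth function by `ε` times a nonnegative function
vanishing on the open half-space `⟪n, x⟫ < 0`. For `ε = 0` these are the functions that are smooth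
at `x₀`. -/
def oneSided (ε : ℝ) (n x₀ : E) : AddSubmonoid (E → ℝ) where
  carrier := {F | ∃ G : E → ℝ, (∀ x, 0 ≤ G x) ∧ (∀ x, ⟪n, x⟫_ℝ < 0 → G x = 0) ∧
    ContDiffAt ℝ ∞ (F - ε • G) x₀}
  zero_mem' := ⟨0, fun _ => le_rfl, fun _ _ => rfl, by
    rw [smul_zero, sub_zero]; exact contDiffAt_const⟩
  add_mem' := by
    rintro F F' ⟨G, hG, hGn, hFG⟩ ⟨G', hG', hGn', hFG'⟩
    refine ⟨G + G', fun x => add_nonneg (hG x) (hG' x), fun x hx => ?_, ?_⟩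
    · simp [hGn x hx, hGn' x hx]
    · rw [smul_add, add_sub_add_comm]
      exact hFG.add hFG'

variable {ε : ℝ} {n x₀ : E} {F F' : E → ℝ}

theorem mem_oneSided_of_contDiffAt (hF : ContDiffAt ℝ ∞ F x₀) : F ∈ oneSided ε n x₀ :=
  ⟨0, fun _ => le_rfl, fun _ _ => rfl, by simpa using hF⟩

theorem mem_oneSided_zero_iff : F ∈ oneSided 0 n x₀ ↔ ContDiffAt ℝ ∞ F x₀ :=
  ⟨fun ⟨_, _, _, hF⟩ => by simpa using hF, fun hF => mem_oneSided_of_contDiffAt hF⟩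

theorem mem_oneSided_of_eventuallyEq (hF : F ∈ oneSided ε n x₀) (h : F' =ᶠ[𝓝 x₀] F) :
    F' ∈ oneSided ε n x₀ := by
  obtain ⟨G, hG, hGn, hFG⟩ := hF
  exact ⟨G, hG, hGn, hFG.congr_of_eventuallyEq (h.sub .rfl)⟩

variable [FiniteDimensional ℝ E]

open scoped Manifold in
theorem exists_cutoff_partition {K : Set E} (hK : IsCompact K) {U : E → Set E}
    (hU : ∀ y, U y ∈ 𝓝 y) :
    ∃ (t : Finset E) (ρ : t → E → ℝ), (∀ y, IsCutoff (ρ y) ∧ tsupport (ρ y) ⊆ U y) ∧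
      ∀ p ∈ K, ∑ y, ρ y p = 1 := by
  let V (y : E) : Set E := interior (U y) ∩ Metric.ball y 1
  have hVopen (y : E) : IsOpen (V y) := isOpen_interior.inter Metric.isOpen_ball
  obtain ⟨t, ht⟩ := hK.elim_finite_subcover V hVopen fun y _ =>
    mem_iUnion.2 ⟨y, mem_interior_iff_mem_nhds.2 (hU y), Metric.mem_ball_self one_pos⟩
  obtain ⟨ρ, hρ⟩ := SmoothPartitionOfUnity.exists_isSubordinate 𝓘(ℝ, E) hK.isClosed
    (fun y : t => V y) (fun y => hVopen y) (by simpa [iUnion_subtype] using ht)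
  refine ⟨t, fun y => ρ y, fun y => ⟨⟨(ρ y).contMDiff.contDiff, ?_, ρ.nonneg y⟩, ?_⟩,
    fun p hp => ?_⟩
  · exact Metric.isCompact_of_isClosed_isBounded (isClosed_tsupport _)
      (Metric.isBounded_ball.subset ((hρ y).trans inter_subset_right))
  · exact (hρ y).trans (inter_subset_left.trans interior_subset)
  · rw [← finsum_eq_sum_of_fintype, ρ.sum_eq_one hp]

variable [MeasurableSpace E] [BorelSpace E]

/-- The contribution to the convolution `f * h` at `y + z` of the points `p` near `y` is
one-sided, however it is cut off. -/
def LocallyOneSided (ε : ℝ) (n : E) (f h : E → ℝ) (y z : E) : Prop :=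
  ∃ U ∈ 𝓝 y, ∀ φ, IsCutoff φ → tsupport φ ⊆ U → localConv φ f h ∈ oneSided ε n (y + z)

theorem exists_nhds_localConv_eventuallyEq {f g h k : E → ℝ} {y z : E} (hf : f =ᶠ[𝓝 y] g)
    (hh : h =ᶠ[𝓝 z] k) : ∃ U ∈ 𝓝 y, ∀ φ : E → ℝ, tsupport φ ⊆ U →
      localConv φ f h =ᶠ[𝓝 (y + z)] localConv φ g k := by
  -- `V` and `W` are neighbourhoods such that `x ∈ W` and `p ∈ V` keep `x - p` near `z`.
  have hsub : Filter.Tendsto (fun q : E × E => q.1 - q.2) (𝓝 (y + z) ×ˢ 𝓝 y) (𝓝 z) := by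
    rw [← nhds_prod_eq]
    exact (continuous_fst.sub continuous_snd).tendsto' _ _ (by simp)
  obtain ⟨W, hW, V, hV, hWV⟩ := Filter.eventually_prod_iff.1 (hsub.eventually hh)
  refine ⟨{p | f p = g p ∧ V p}, hf.and hV, fun φ hsupp => ?_⟩
  filter_upwards [hW] with x hx
  refine integral_congr_ae (.of_forall fun p => ?_)
  by_cases hp : φ p = 0
  · simp [hp]
  · obtain ⟨hfp, hVp⟩ := hsupp (subset_tsupport _ hp)
    simp only [hfp, hWV hx hVp]

theorem locallyOneSided_of_eventuallyEq {f g h k : E → ℝ} {y z : E} (hf : f =ᶠ[𝓝 y] g)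
    (hh : h =ᶠ[𝓝 z] k) (hgk : ∀ φ, IsCutoff φ → localConv φ g k ∈ oneSided ε n (y + z)) :
    LocallyOneSided ε n f h y z := by
  obtain ⟨U, hU, hUφ⟩ := exists_nhds_localConv_eventuallyEq hf hh
  exact ⟨U, hU, fun φ hφ hsupp => mem_oneSided_of_eventuallyEq (hgk φ hφ) (hUφ φ hsupp)⟩

theorem locallyOneSided_of_mem_invariantSums {𝓜 𝓛 : Set (Submodule ℝ E)} {f g h k : E → ℝ}
    {y z : E} (hf : f =ᶠ[𝓝 y] g) (hh : h =ᶠ[𝓝 z] k) (hg : g ∈ invariantSums 𝓜)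
    (hk : k ∈ invariantSums 𝓛) (h𝓜𝓛 : ∀ M ∈ 𝓜, ∀ L ∈ 𝓛, M ⊔ L = ⊤) :
    LocallyOneSided ε n f h y z :=
  locallyOneSided_of_eventuallyEq hf hh fun _ hφ => mem_oneSided_of_contDiffAt
    (contDiff_localConv_of_mem_invariantSums h𝓜𝓛 hg hk hφ).contDiffAt

theorem localConv_mem_oneSided {f h χ : E → ℝ} (hf : MemLp f ∞) (hh : MemLp h ∞) {K : Set E}
    (hK : IsCompact K) (hsupp : ∀ᶠ x in 𝓝 x₀, ∀ p, f p * h (x - p) ≠ 0 → p ∈ K)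
    (hloc : ∀ y, LocallyOneSided ε n f h y (x₀ - y)) (hχ : ContDiff ℝ ∞ χ) (hχ₀ : ∀ p, 0 ≤ χ p) :
    localConv χ f h ∈ oneSided ε n x₀ := by
  choose U hU hUφ using hloc
  obtain ⟨t, ρ, hρ, hsum⟩ := exists_cutoff_partition hK hU
  have hcut (y) : IsCutoff (χ * ρ y) :=
    ⟨hχ.mul (hρ y).1.smooth, (hρ y).1.hasCompactSupport.mul_left,
      fun p => mul_nonneg (hχ₀ p) ((hρ y).1.nonneg p)⟩
  refine mem_oneSided_of_eventuallyEq (F := ∑ y, localConv (χ * ρ y) f h)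
    (sum_mem fun y _ => ?_) ?_
  · simpa using hUφ y _ (hcut y) ((tsupport_mul_subset_right).trans (hρ y).2)
  · filter_upwards [hsupp] with x hx
    simp only [localConv, Finset.sum_apply]
    rw [← integral_finsetSum _ fun y _ => integrable_localConv (hcut y) hf hh x]
    congr with p
    by_cases hp : f p * h (x - p) = 0
    · simp [hp]
    · simp only [Pi.mul_apply, ← Finset.sum_mul, ← Finset.mul_sum, hsum p (hx p hp), mul_one]

theorem eq_top_of_orthogonal_le {E : Type*} [NormedAddCommGroup E] [InnerProductSpace ℝ E] {n : E}
    {Q : Submodule ℝ E} (hQ : (ℝ ∙ n)ᗮ ≤ Q) (hQn : ¬ Q ≤ (ℝ ∙ n)ᗮ) : Q = ⊤ := by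
  obtain ⟨q, hq, hqn⟩ := SetLike.not_le_iff_exists.1 hQn
  rw [mem_orthogonal_singleton_iff_inner_right] at hqn
  refine eq_top_iff.2 fun x _ => ?_
  rw [← sub_add_cancel x ((⟪n, x⟫_ℝ / ⟪n, q⟫_ℝ) • q)]
  refine add_mem (hQ ?_) (Q.smul_mem _ hq)
  rw [mem_orthogonal_singleton_iff_inner_right, inner_sub_right, inner_smul_right,
    div_mul_cancel₀ _ hqn, sub_self]

/-- The subspaces containing `L` that cross the hyperplane orthogonal to `n`. -/
def transverseTo (n : E) (L : Submodule ℝ E) : Set (Submodule ℝ E) :=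
  {M | L ≤ M ∧ ¬ M ≤ (ℝ ∙ n)ᗮ}

/-- `f` is `ε • u` up to functions invariant under directions transverse to the hyperplane
orthogonal to `n`, where `u ≥ 0` is invariant under `L` and supported on the side
`0 ≤ ⟪n, p⟫` of the hyperplane. -/
structure HasOneSidedPart (n : E) (ε : ℝ) (L : Submodule ℝ E) (f u : E → ℝ) : Prop where
  memLp : MemLp u ∞
  nonneg : ∀ p, 0 ≤ u p
  eq_zero : ∀ p, ⟪n, p⟫_ℝ < 0 → u p = 0
  invariant : InvariantUnder u L
  remainder : f - ε • u ∈ invariantSums (transverseTo n L)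

variable {ε' : ℝ} {L L' : Submodule ℝ E} {f h u u' φ : E → ℝ}

theorem HasOneSidedPart.contDiff_localConv_sub (hf : HasOneSidedPart n ε L f u)
    (hh : HasOneSidedPart n ε' L' h u') (hLL' : (ℝ ∙ n)ᗮ ≤ L ⊔ L') (hφ : IsCutoff φ) :
    ContDiff ℝ ∞ (localConv φ f h - (ε * ε') • localConv φ u u') := by
  obtain ⟨k, rfl⟩ : ∃ k, f = k + ε • u := ⟨f - ε • u, (sub_add_cancel _ _).symm⟩
  obtain ⟨k', rfl⟩ : ∃ k', h = k' + ε' • u' := ⟨h - ε' • u', (sub_add_cancel _ _).symm⟩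
  have hk : k ∈ invariantSums (transverseTo n L) := by simpa using hf.remainder
  have hk' : k' ∈ invariantSums (transverseTo n L') := by simpa using hh.remainder
  have hkLp := memLp_top_of_mem_invariantSums hk
  have hk'Lp := memLp_top_of_mem_invariantSums hk'
  have hεu : MemLp (ε • u) ∞ := hf.memLp.const_smul ε
  have hεu' : MemLp (ε' • u') ∞ := hh.memLp.const_smul ε'
  have htop {M M'} (hM : L ≤ M) (hM' : L' ≤ M') (hn : ¬ M ⊔ M' ≤ (ℝ ∙ n)ᗮ) : M ⊔ M' = ⊤ :=
    eq_top_of_orthogonal_le (hLL'.trans (sup_le_sup hM hM')) hn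
  have hkk' := contDiff_localConv_of_mem_invariantSums (fun M hM M' hM' =>
    htop hM.1 hM'.1 fun hle => hM.2 (le_sup_left.trans hle)) hk hk' hφ
  have hku' := contDiff_localConv_of_mem_invariantSums (𝓛 := {L'}) (fun M hM M' hM' =>
    htop hM.1 (ge_of_eq hM') fun hle => hM.2 (le_sup_left.trans hle)) hk
    (mem_invariantSums rfl hh.memLp hh.invariant) hφ
  have huk' := contDiff_localConv_of_mem_invariantSums (𝓜 := {L}) (fun M hM M' hM' =>
    htop (ge_of_eq hM) hM'.1 fun hle => hM'.2 (le_sup_right.trans hle))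
    (mem_invariantSums rfl hf.memLp hf.invariant) hk' hφ
  have hexpand : localConv φ (k + ε • u) (k' + ε' • u') - (ε * ε') • localConv φ u u'
      = localConv φ k k' + ε' • localConv φ k u' + ε • localConv φ u k' := by
    rw [localConv_add_left hφ hkLp hεu (hk'Lp.add hεu'), localConv_add_right hφ hkLp hk'Lp hεu',
      localConv_add_right hφ hεu hk'Lp hεu']
    simp only [localConv_smul_left, localConv_smul_right, smul_smul, mul_comm ε' ε]
    abel
  rw [hexpand]
  exact (hkk'.add (contDiff_const.smul hku')).add (contDiff_const.smul huk')

theorem HasOneSidedPart.localConv_mem_oneSided (hf : HasOneSidedPart n ε L f u)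
    (hh : HasOneSidedPart n ε' L' h u') (hLL' : (ℝ ∙ n)ᗮ ≤ L ⊔ L') (hφ : IsCutoff φ) (x₀ : E) :
    localConv φ f h ∈ oneSided (ε * ε') n x₀ :=
  ⟨localConv φ u u', localConv_nonneg hφ hf.nonneg hh.nonneg,
    fun _ => localConv_eq_zero_of_inner_neg hf.eq_zero hh.eq_zero,
    (hf.contDiff_localConv_sub hh hLL' hφ).contDiffAt⟩

end OneSided

section PolyhedralCone

variable {E : Type*} [NormedAddCommGroup E] [InnerProductSpace ℝ E]

/-- The polyhedral cone with outer normals `S`. -/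
def polyhedralCone (S : Finset E) : Set E := {x | ∀ s ∈ S, ⟪s, x⟫_ℝ ≤ 0}

open Classical in
/-- The normals whose constraint is an equality at `y`. They cut out the tangent cone at `y`. -/
noncomputable def activeNormals (S : Finset E) (y : E) : Finset E := S.filter fun s => ⟪s, y⟫_ℝ = 0

/-- The largest subspace contained in the polyhedral cone with normals `I`. -/
noncomputable def linealitySpace (I : Finset E) : Submodule ℝ E := ⨅ s ∈ I, (ℝ ∙ s)ᗮ

/-- The indicator function of a polyhedral cone. -/
noncomputable def coneIndicator (S : Finset E) : E → ℝ := (polyhedralCone S).indicator 1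

/-- `y` spans an edge of the polyhedral cone with normals `S`. -/
structure IsEdgeDirection (S : Finset E) (y : E) : Prop where
  mem : y ∈ polyhedralCone S
  ne_zero : y ≠ 0
  linealitySpace_eq : linealitySpace (activeNormals S y) = ℝ ∙ y

/-- The polyhedral cone with normals `S` has interior points and lies strictly above the
hyperplane orthogonal to `e`, apart from its apex. The interior point is required to satisfy all
constraints strictly, so that no normal is zero. -/
structure IsSolidAbove (e : E) (S : Finset E) : Prop where
  exists_interior : ∃ p, ∀ s ∈ S, ⟪s, p⟫_ℝ < 0
  inner_pos : ∀ x ∈ polyhedralCone S, x ≠ 0 → 0 < ⟪e, x⟫_ℝ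

variable {S T I : Finset E} {e n s v x y z : E} {c : ℝ}

theorem exists_pos_add_smul_mem {U : Set E} (hU : U ∈ 𝓝 x) (v : E) :
    ∃ t > (0 : ℝ), x + t • v ∈ U := by
  have hlim : Filter.Tendsto (fun t : ℝ => x + t • v) (𝓝[>] 0) (𝓝 x) :=
    ((show Continuous fun t : ℝ => x + t • v by fun_prop).tendsto' 0 x (by simp)).mono_left
      nhdsWithin_le_nhds
  exact ((hlim.eventually_mem hU).and self_mem_nhdsWithin).exists.imp fun t ht => ht.symm

theorem mem_activeNormals : s ∈ activeNormals S y ↔ s ∈ S ∧ ⟪s, y⟫_ℝ = 0 := by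
  simp [activeNormals]

theorem mem_linealitySpace : v ∈ linealitySpace I ↔ ∀ s ∈ I, ⟪s, v⟫_ℝ = 0 := by
  simp [linealitySpace, mem_orthogonal_singleton_iff_inner_right]

theorem self_mem_linealitySpace (S : Finset E) (y : E) : y ∈ linealitySpace (activeNormals S y) :=
  mem_linealitySpace.2 fun _ hs => (mem_activeNormals.1 hs).2

theorem zero_mem_polyhedralCone (S : Finset E) : 0 ∈ polyhedralCone S :=
  fun _ _ => (inner_zero_right _).le

theorem smul_mem_polyhedralCone (hx : x ∈ polyhedralCone S) (hc : 0 ≤ c) :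
    c • x ∈ polyhedralCone S := fun s hs => by
  rw [inner_smul_right]
  exact mul_nonpos_of_nonneg_of_nonpos hc (hx s hs)

theorem add_mem_polyhedralCone (hx : x ∈ polyhedralCone S) (hy : y ∈ polyhedralCone S) :
    x + y ∈ polyhedralCone S := fun s hs => by
  rw [inner_add_right]
  exact add_nonpos (hx s hs) (hy s hs)

theorem isClosed_polyhedralCone (S : Finset E) : IsClosed (polyhedralCone S) := by
  simp only [polyhedralCone, ofPred_forall]
  exact isClosed_biInter fun s _ => isClosed_le (by fun_prop) continuous_const

theorem polyhedralCone_subset_activeNormals (S : Finset E) (y : E) :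
    polyhedralCone S ⊆ polyhedralCone (activeNormals S y) :=
  fun _ hp s hs => hp s (mem_activeNormals.1 hs).1

theorem activeNormals_smul (S : Finset E) (y : E) (hc : c ≠ 0) :
    activeNormals S (c • y) = activeNormals S y := by
  ext s
  simp [mem_activeNormals, inner_smul_right, hc]

theorem IsEdgeDirection.smul (hy : IsEdgeDirection S y) (hc : 0 < c) :
    IsEdgeDirection S (c • y) where
  mem := smul_mem_polyhedralCone hy.mem hc.le
  ne_zero := smul_ne_zero hc.ne' hy.ne_zero
  linealitySpace_eq := by
    rw [activeNormals_smul S y hc.ne', hy.linealitySpace_eq,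
      span_singleton_smul_eq (IsUnit.mk0 c hc.ne')]

theorem eventually_mem_polyhedralCone_iff (hy : y ∈ polyhedralCone S) :
    ∀ᶠ p in 𝓝 y, p ∈ polyhedralCone S ↔ p ∈ polyhedralCone (activeNormals S y) := by
  have hinactive : ∀ s ∈ S, ∀ᶠ p in 𝓝 y, ⟪s, y⟫_ℝ = 0 ∨ ⟪s, p⟫_ℝ < 0 := fun s hs => by
    rcases (hy s hs).eq_or_lt with h | h
    · exact .of_forall fun _ => .inl h
    · exact ((show Continuous fun p => ⟪s, p⟫_ℝ by fun_prop).tendsto y).eventually_lt_const h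
        |>.mono fun _ => .inr
  filter_upwards [(Filter.eventually_all_finset S).2 hinactive] with p hp
  exact ⟨fun h => polyhedralCone_subset_activeNormals S y h, fun h s hs =>
    (hp s hs).elim (fun hsy => h s (mem_activeNormals.2 ⟨hs, hsy⟩)) le_of_lt⟩

theorem exists_pos_add_smul_mem_polyhedralCone (hy : y ∈ polyhedralCone S)
    (hv : v ∈ polyhedralCone (activeNormals S y)) :
    ∃ t > (0 : ℝ), y + t • v ∈ polyhedralCone S := by
  obtain ⟨t, ht, hmem⟩ := exists_pos_add_smul_mem (eventually_mem_polyhedralCone_iff hy) v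
  exact ⟨t, ht, hmem.2 (add_mem_polyhedralCone
    (fun s hs => (mem_activeNormals.1 hs).2.le) (smul_mem_polyhedralCone hv ht.le))⟩

theorem coneIndicator_of_notMem (hx : x ∉ polyhedralCone S) : coneIndicator S x = 0 :=
  indicator_of_notMem hx 1

theorem mem_of_coneIndicator_ne_zero (hx : coneIndicator S x ≠ 0) : x ∈ polyhedralCone S :=
  mem_of_indicator_ne_zero hx

theorem coneIndicator_congr (h : x ∈ polyhedralCone S ↔ y ∈ polyhedralCone T) :
    coneIndicator S x = coneIndicator T y := by
  by_cases hy : y ∈ polyhedralCone T <;> simp [coneIndicator, h, hy]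

theorem invariantUnder_coneIndicator (I : Finset E) :
    InvariantUnder (coneIndicator I) (linealitySpace I) := fun p v hv =>
  coneIndicator_congr <| forall₂_congr fun s hs => by
    rw [inner_add_right, mem_linealitySpace.1 hv s hs, add_zero]

theorem coneIndicator_eventuallyEq_of_mem (hy : y ∈ polyhedralCone S) :
    coneIndicator S =ᶠ[𝓝 y] coneIndicator (activeNormals S y) :=
  (eventually_mem_polyhedralCone_iff hy).mono fun _ => coneIndicator_congr

theorem coneIndicator_eventuallyEq_zero (hy : y ∉ polyhedralCone S) :
    coneIndicator S =ᶠ[𝓝 y] 0 :=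
  ((isClosed_polyhedralCone S).isOpen_compl.eventually_mem hy).mono fun _ => coneIndicator_of_notMem

section Measure

variable [MeasurableSpace E] [BorelSpace E]

theorem memLp_coneIndicator [FiniteDimensional ℝ E] (S : Finset E) :
    MemLp (coneIndicator S) ∞ :=
  (memLp_top_const (1 : ℝ)).indicator (isClosed_polyhedralCone S).measurableSet

theorem exists_germ_coneIndicator [FiniteDimensional ℝ E] (S : Finset E) (y : E) :
    ∃ k ∈ invariantSums
      {M | y ∈ polyhedralCone S ∧ M = linealitySpace (activeNormals S y)},
      coneIndicator S =ᶠ[𝓝 y] k := by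
  by_cases hy : y ∈ polyhedralCone S
  · exact ⟨_, mem_invariantSums ⟨hy, rfl⟩ (memLp_coneIndicator _) (invariantUnder_coneIndicator _),
      coneIndicator_eventuallyEq_of_mem hy⟩
  · exact ⟨0, zero_mem _, coneIndicator_eventuallyEq_zero hy⟩

end Measure

theorem IsSolidAbove.inner_nonneg (hS : IsSolidAbove e S) (hx : x ∈ polyhedralCone S) :
    0 ≤ ⟪e, x⟫_ℝ := by
  rcases eq_or_ne x 0 with rfl | hx₀
  · exact (inner_zero_right _).ge
  · exact (hS.inner_pos x hx hx₀).le

theorem IsSolidAbove.mem_frontier (hS : IsSolidAbove e S) (hx : x ∈ polyhedralCone S)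
    (hs : s ∈ activeNormals S x) : x ∈ frontier (polyhedralCone S) := by
  rw [(isClosed_polyhedralCone S).frontier_eq]
  refine ⟨hx, fun hint => ?_⟩
  obtain ⟨p, hp⟩ := hS.exists_interior
  obtain ⟨t, ht, hmem⟩ := exists_pos_add_smul_mem (mem_interior_iff_mem_nhds.1 hint) (-p)
  obtain ⟨hsS, hsx⟩ := mem_activeNormals.1 hs
  have hle := hmem s hsS
  rw [inner_add_right, inner_smul_right, hsx, zero_add, inner_neg_right] at hle
  exact (mul_pos ht (neg_pos.2 (hp s hsS))).not_ge hle

theorem IsSolidAbove.exists_norm_le [FiniteDimensional ℝ E] (hS : IsSolidAbove e S) :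
    ∃ M > 0, ∀ p ∈ polyhedralCone S, ‖p‖ ≤ M * ⟪e, p⟫_ℝ := by
  have hcompact : IsCompact (Metric.sphere 0 1 ∩ polyhedralCone S) :=
    (isCompact_sphere (0 : E) 1).inter_right (isClosed_polyhedralCone S)
  obtain ⟨m, hm, hmin⟩ := hcompact.exists_forall_le' (f := fun p => ⟪e, p⟫_ℝ) (a := 0)
    (by fun_prop) fun p hp => hS.inner_pos p hp.2 (ne_zero_of_mem_unit_sphere ⟨p, hp.1⟩)
  refine ⟨m⁻¹, inv_pos.2 hm, fun p hp => ?_⟩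
  rcases eq_or_ne p 0 with rfl | hp₀
  · simp
  have hunit := hmin (‖p‖⁻¹ • p) ⟨by simp [norm_smul, hp₀],
    smul_mem_polyhedralCone hp (inv_nonneg.2 (norm_nonneg p))⟩
  rw [inner_smul_right, inv_mul_eq_div, le_div_iff₀ (norm_pos_iff.2 hp₀)] at hunit
  rwa [inv_mul_eq_div, le_div_iff₀' hm]

theorem IsSolidAbove.eventually_mem_closedBall [FiniteDimensional ℝ E] (hS : IsSolidAbove e S)
    (hT : IsSolidAbove e T) (x₀ : E) :
    ∃ R : ℝ, ∀ᶠ x in 𝓝 x₀, ∀ p ∈ polyhedralCone S, x - p ∈ polyhedralCone T →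
      p ∈ Metric.closedBall 0 R := by
  obtain ⟨M, hM, hbound⟩ := hS.exists_norm_le
  refine ⟨M * (⟪e, x₀⟫_ℝ + 1), ?_⟩
  filter_upwards [((show Continuous fun x => ⟪e, x⟫_ℝ by fun_prop).tendsto x₀).eventually_lt_const
    (lt_add_one _)] with x hx p hp hxp
  have hle := hT.inner_nonneg hxp
  rw [inner_sub_right] at hle
  rw [mem_closedBall_zero_iff]
  exact (hbound p hp).trans (mul_le_mul_of_nonneg_left (by linarith) hM.le)

theorem exists_exit_of_add_notMem (hy : y ∈ polyhedralCone S) (hyz : y + z ∉ polyhedralCone S) :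
    ∃ l ∈ Ico (0 : ℝ) 1, y + l • z ∈ polyhedralCone S ∧
      ∃ s ∈ activeNormals S (y + l • z), 0 < ⟪s, z⟫_ℝ := by
  classical
  obtain ⟨s₀, hs₀, hs₀yz⟩ : ∃ s ∈ S, 0 < ⟪s, y + z⟫_ℝ := by
    simpa only [polyhedralCone, mem_ofPred_eq, not_forall, not_le, exists_prop] using hyz
  rw [inner_add_right] at hs₀yz
  have hs₀z : 0 < ⟪s₀, z⟫_ℝ := by linarith [hy s₀ hs₀]
  obtain ⟨s, hs, hmin⟩ := Finset.exists_min_image (S.filter fun s => 0 < ⟪s, z⟫_ℝ)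
    (fun s => -⟪s, y⟫_ℝ / ⟪s, z⟫_ℝ) ⟨s₀, by simp [hs₀, hs₀z]⟩
  simp only [Finset.mem_filter] at hs hmin
  obtain ⟨hsS, hsz⟩ := hs
  set l := -⟪s, y⟫_ℝ / ⟪s, z⟫_ℝ with hl
  have hl₀ : 0 ≤ l := div_nonneg (by linarith [hy s hsS]) hsz.le
  refine ⟨l, ⟨hl₀, (hmin s₀ ⟨hs₀, hs₀z⟩).trans_lt ?_⟩, fun q hq => ?_, s,
    mem_activeNormals.2 ⟨hsS, ?_⟩, hsz⟩
  · rw [div_lt_one hs₀z]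
    linarith
  · rw [inner_add_right, inner_smul_right]
    by_cases hqz : 0 < ⟪q, z⟫_ℝ
    · linarith [(le_div_iff₀ hqz).1 (hmin q ⟨hq, hqz⟩)]
    · linarith [hy q hq, mul_nonpos_of_nonneg_of_nonpos hl₀ (not_lt.1 hqz)]
  · rw [inner_add_right, inner_smul_right, hl, div_mul_cancel₀ _ hsz.ne', add_neg_cancel]

theorem linealitySpace_activeNormals_add_le (hv : v ∈ linealitySpace (activeNormals S y)) :
    linealitySpace (activeNormals S (y + v)) ≤ linealitySpace (activeNormals S y) := by
  intro u hu
  rw [mem_linealitySpace] at hu hv ⊢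
  refine fun s hs => hu s (mem_activeNormals.2 ⟨(mem_activeNormals.1 hs).1, ?_⟩)
  rw [inner_add_right, hv s hs, (mem_activeNormals.1 hs).2, add_zero]

theorem linealitySpace_activeNormals_le_span {r w : E}
    (hw : ∀ x ∈ polyhedralCone S, ⟪w, x⟫_ℝ ≤ 0) (hr : r ∈ polyhedralCone S) (hwr : ⟪w, r⟫_ℝ = 0) :
    linealitySpace (activeNormals S r) ≤ span ℝ {x | x ∈ polyhedralCone S ∧ ⟪w, x⟫_ℝ = 0} := by
  intro v hv
  have hmem {u} (hu : u ∈ linealitySpace (activeNormals S r)) :=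
    exists_pos_add_smul_mem_polyhedralCone hr fun s hs => (mem_linealitySpace.1 hu s hs).le
  have hnonpos {u} (hu : u ∈ linealitySpace (activeNormals S r)) : ⟪w, u⟫_ℝ ≤ 0 := by
    obtain ⟨t, ht, htu⟩ := hmem hu
    have := hw _ htu
    rw [inner_add_right, hwr, zero_add, inner_smul_right] at this
    exact nonpos_of_mul_nonpos_right this ht
  have hwv : ⟪w, v⟫_ℝ = 0 := (hnonpos hv).antisymm (by simpa using hnonpos (neg_mem hv))
  obtain ⟨t, ht, htv⟩ := hmem hv
  have hrspan : r ∈ span ℝ {x | x ∈ polyhedralCone S ∧ ⟪w, x⟫_ℝ = 0} := subset_span ⟨hr, hwr⟩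
  have hface : r + t • v ∈ span ℝ {x | x ∈ polyhedralCone S ∧ ⟪w, x⟫_ℝ = 0} :=
    subset_span ⟨htv, by rw [inner_add_right, inner_smul_right, hwr, hwv, mul_zero, add_zero]⟩
  exact (smul_mem_iff _ ht.ne').1 ((Submodule.add_mem_iff_right _ hrspan).1 hface)

theorem exists_mem_activeNormals_of_ne_top (h : linealitySpace (activeNormals S y) ≠ ⊤) :
    ∃ s, s ∈ activeNormals S y := by
  contrapose! h
  exact eq_top_iff.2 fun v _ => mem_linealitySpace.2 fun s hs => absurd hs (h s)

theorem orthogonal_singleton_ne_top (hn : n ≠ 0) : (ℝ ∙ n)ᗮ ≠ ⊤ := by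
  simpa [orthogonal_eq_top_iff] using hn

theorem exists_ne_zero_le_orthogonal [FiniteDimensional ℝ E] {L : Submodule ℝ E} (hL : L ≠ ⊤) :
    ∃ n ≠ 0, L ≤ (ℝ ∙ n)ᗮ := by
  obtain ⟨n, hn, hn₀⟩ := exists_mem_ne_zero_of_ne_bot (mt orthogonal_eq_bot_iff.1 hL)
  exact ⟨n, hn₀, le_orthogonal_iff_le_orthogonal.2 ((span_singleton_le_iff_mem _ _).2 hn)⟩

variable [Fact (finrank ℝ E = 3)]

theorem eq_span_singleton_or_eq_orthogonal {L : Submodule ℝ E} (hn : n ≠ 0) (hL : L ≤ (ℝ ∙ n)ᗮ)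
    (hy : y ∈ L) (hy₀ : y ≠ 0) : L = ℝ ∙ y ∨ L = (ℝ ∙ n)ᗮ := by
  have : FiniteDimensional ℝ E := .of_fact_finrank_eq_succ 2
  have hplane : finrank ℝ (ℝ ∙ n)ᗮ = 2 := finrank_orthogonal_span_singleton hn
  by_cases h : 2 ≤ finrank ℝ L
  · exact .inr (eq_of_le_of_finrank_le hL (hplane.trans_le h))
  · refine .inl (eq_of_le_of_finrank_le ((span_singleton_le_iff_mem _ _).2 hy) ?_).symm
    rw [finrank_span_singleton hy₀]
    lia

theorem IsSolidAbove.exists_isEdgeDirection_add_smul (hS : IsSolidAbove e S) (hn : n ≠ 0)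
    (hy : y ∈ polyhedralCone S) (hy₀ : y ≠ 0)
    (hL : linealitySpace (activeNormals S y) ≤ (ℝ ∙ n)ᗮ) (hz : z ∈ (ℝ ∙ n)ᗮ) (hez : 0 < ⟪e, z⟫_ℝ)
    (hyz : y + z ∉ frontier (polyhedralCone S)) :
    ∃ l ∈ Ico (0 : ℝ) 1, IsEdgeDirection S (y + l • z) := by
  rcases eq_span_singleton_or_eq_orthogonal hn hL (self_mem_linealitySpace S y) hy₀ with hyL | hnL
  · exact ⟨0, ⟨le_rfl, one_pos⟩, by simpa using ⟨hy, hy₀, hyL⟩⟩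
  have hzL : z ∈ linealitySpace (activeNormals S y) := hnL ▸ hz
  have hexit : y + z ∉ polyhedralCone S := fun hmem => by
    obtain ⟨s, hs⟩ := exists_mem_activeNormals_of_ne_top (hnL ▸ orthogonal_singleton_ne_top hn)
    refine hyz (hS.mem_frontier hmem (mem_activeNormals.2 ⟨(mem_activeNormals.1 hs).1, ?_⟩))
    rw [inner_add_right, (mem_activeNormals.1 hs).2, mem_linealitySpace.1 hzL s hs, add_zero]
  obtain ⟨l, hl, hmem, s, hs, hsz⟩ := exists_exit_of_add_notMem hy hexit
  have hpos : 0 < ⟪e, y + l • z⟫_ℝ := by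
    rw [inner_add_right, inner_smul_right]
    exact add_pos_of_pos_of_nonneg (hS.inner_pos y hy hy₀) (mul_nonneg hl.1 hez.le)
  have hne : y + l • z ≠ 0 := fun h => by simp [h] at hpos
  refine ⟨l, hl, hmem, hne, (eq_span_singleton_or_eq_orthogonal hn
    ((linealitySpace_activeNormals_add_le (smul_mem _ l hzL)).trans hL)
    (self_mem_linealitySpace S _) hne).resolve_right fun hnL' => hsz.ne' ?_⟩
  exact mem_linealitySpace.1 (hnL'.ge hz) s hs

/-- The sums of an edge of one polyhedral cone and an edge of another. -/
def edgeSums (S T : Finset E) : Set E :=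
  {x | ∃ r t, IsEdgeDirection S r ∧ IsEdgeDirection T t ∧ x = r + t}

theorem IsSolidAbove.sup_linealitySpace_eq_top [FiniteDimensional ℝ E] (hS : IsSolidAbove e S)
    (hT : IsSolidAbove e T) (hy : y ∈ polyhedralCone S) (hz : z ∈ polyhedralCone T)
    (hyzS : y + z ∉ frontier (polyhedralCone S)) (hyzT : y + z ∉ frontier (polyhedralCone T))
    (hyz : y + z ∉ edgeSums S T) :
    linealitySpace (activeNormals S y) ⊔ linealitySpace (activeNormals T z) = ⊤ := by
  by_contra hne
  obtain ⟨n, hn, hL⟩ := exists_ne_zero_le_orthogonal hne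
  obtain ⟨hLy, hLz⟩ := sup_le_iff.1 hL
  have hyn := hLy (self_mem_linealitySpace S y)
  have hzn := hLz (self_mem_linealitySpace T z)
  have hne_top {L : Submodule ℝ E} (h : L ≤ (ℝ ∙ n)ᗮ) : L ≠ ⊤ := fun htop =>
    orthogonal_singleton_ne_top hn (top_le_iff.1 (htop ▸ h))
  rcases eq_or_ne y 0 with rfl | hy₀
  · obtain ⟨s, hs⟩ := exists_mem_activeNormals_of_ne_top (hne_top hLz)
    exact hyzT (by simpa using hT.mem_frontier hz hs)
  rcases eq_or_ne z 0 with rfl | hz₀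
  · obtain ⟨s, hs⟩ := exists_mem_activeNormals_of_ne_top (hne_top hLy)
    exact hyzS (by simpa using hS.mem_frontier hy hs)
  -- Slide mass from `z` to `y` until `y` lies on an edge, and then from `y` to `z`.
  obtain ⟨l, hl, hedge⟩ := hS.exists_isEdgeDirection_add_smul hn hy hy₀ hLy hzn
    (hT.inner_pos z hz hz₀) hyzS
  have hl' : 0 < 1 - l := sub_pos.2 hl.2
  obtain ⟨m, hm, hedge'⟩ := hT.exists_isEdgeDirection_add_smul (y := (1 - l) • z)
    (z := y + l • z) hn (smul_mem_polyhedralCone hz hl'.le) (smul_ne_zero hl'.ne' hz₀)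
    (by rwa [activeNormals_smul T z hl'.ne']) (add_mem hyn (smul_mem _ l hzn))
    (hS.inner_pos _ hedge.mem hedge.ne_zero)
    (by rwa [show (1 - l) • z + (y + l • z) = y + z by module])
  exact hyz ⟨(1 - m) • (y + l • z), _, hedge.smul (sub_pos.2 hm.2), hedge', by module⟩

section Measure

variable [FiniteDimensional ℝ E] [MeasurableSpace E] [BorelSpace E]

theorem contDiffAt_localConv_coneIndicator (hS : IsSolidAbove e S) (hT : IsSolidAbove e T)
    (hxS : x ∉ frontier (polyhedralCone S)) (hxT : x ∉ frontier (polyhedralCone T))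
    (hx : x ∉ edgeSums S T) :
    ContDiffAt ℝ ∞ (localConv 1 (coneIndicator S) (coneIndicator T)) x := by
  obtain ⟨R, hR⟩ := hS.eventually_mem_closedBall hT x
  refine (mem_oneSided_zero_iff (n := 0)).1 <| localConv_mem_oneSided (memLp_coneIndicator S)
    (memLp_coneIndicator T) (ProperSpace.isCompact_closedBall 0 R) ?_ (fun y => ?_) contDiff_const
    fun _ => zero_le_one
  · exact hR.mono fun x' h p hp => h p (mem_of_coneIndicator_ne_zero (left_ne_zero_of_mul hp))
      (mem_of_coneIndicator_ne_zero (right_ne_zero_of_mul hp))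
  · obtain ⟨f, hf, hSf⟩ := exists_germ_coneIndicator S y
    obtain ⟨h, hh, hTh⟩ := exists_germ_coneIndicator T (x - y)
    refine locallyOneSided_of_mem_invariantSums hSf hTh hf hh ?_
    rintro _ ⟨hy, rfl⟩ _ ⟨hz, rfl⟩
    exact hS.sup_linealitySpace_eq_top hT hy hz (by rwa [add_sub_cancel])
      (by rwa [add_sub_cancel]) (by rwa [add_sub_cancel])

end Measure

end PolyhedralCone

section Wedge

variable {E : Type*} [NormedAddCommGroup E] [InnerProductSpace ℝ E]
variable {S I : Finset E} {e n p q s t y : E} {l m : ℝ}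

/-- `s` and `t` are the outer normals of the two facets that meet along the edge spanned by `y`. -/
structure IsWedge (S : Finset E) (y s t : E) : Prop where
  left_mem : s ∈ activeNormals S y
  right_mem : t ∈ activeNormals S y
  mem_iff : ∀ p, p ∈ polyhedralCone (activeNormals S y) ↔ ⟪s, p⟫_ℝ ≤ 0 ∧ ⟪t, p⟫_ℝ ≤ 0
  mem_span : ∀ p, ⟪s, p⟫_ℝ = 0 → ⟪t, p⟫_ℝ = 0 → p ∈ ℝ ∙ y

theorem IsWedge.symm (h : IsWedge S y s t) : IsWedge S y t s where
  left_mem := h.right_mem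
  right_mem := h.left_mem
  mem_iff p := (h.mem_iff p).trans and_comm
  mem_span p ht hs := h.mem_span p hs ht

-- Modulo `linealitySpace I` the cone is planar; its extreme normals are those of extremal slope
-- `⟪s, q⟫ / (-⟪s, p⟫)`.
theorem exists_pair_mem_polyhedralCone_iff (hI : I.Nonempty) (hp : ∀ s ∈ I, ⟪s, p⟫_ℝ < 0)
    (htop : linealitySpace I ⊔ span ℝ {p, q} = ⊤) :
    ∃ s ∈ I, ∃ t ∈ I, ∀ x, x ∈ polyhedralCone I ↔ ⟪s, x⟫_ℝ ≤ 0 ∧ ⟪t, x⟫_ℝ ≤ 0 := by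
  set slope : E → ℝ := fun s => ⟪s, q⟫_ℝ / (-⟪s, p⟫_ℝ) with hslope
  have hcoord (x : E) : ∃ b c : ℝ, ∀ s ∈ I, ⟪s, x⟫_ℝ ≤ 0 ↔ c * slope s ≤ b := by
    obtain ⟨v, hv, w, hw, rfl⟩ := mem_sup.1 (htop ▸ mem_top : x ∈ linealitySpace I ⊔ span ℝ {p, q})
    obtain ⟨b, c, rfl⟩ := mem_span_pair.1 hw
    refine ⟨b, c, fun s hs => ?_⟩
    have hps : 0 < -⟪s, p⟫_ℝ := neg_pos.2 (hp s hs)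
    rw [hslope, ← mul_div_assoc, div_le_iff₀ hps]
    simp only [inner_add_right, inner_smul_right, mem_linealitySpace.1 hv s hs]
    constructor <;> intro h <;> linarith
  obtain ⟨s, hs, hmax⟩ := I.exists_max_image slope hI
  obtain ⟨t, ht, hmin⟩ := I.exists_min_image slope hI
  refine ⟨s, hs, t, ht, fun x => ⟨fun hx => ⟨hx s hs, hx t ht⟩, fun ⟨hsx, htx⟩ r hr => ?_⟩⟩
  obtain ⟨b, c, hbc⟩ := hcoord x
  rw [hbc _ hs] at hsx
  rw [hbc _ ht] at htx
  rw [hbc _ hr]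
  rcases le_total 0 c with hc | hc
  · exact (mul_le_mul_of_nonneg_left (hmax r hr) hc).trans hsx
  · exact (mul_le_mul_of_nonpos_left (hmin r hr) hc).trans htx

theorem IsWedge.exists_eq_smul_add_smul (h : IsWedge S y s t) (hy : y ∈ (ℝ ∙ n)ᗮ) :
    ∃ l m : ℝ, n = l • s + m • t := by
  suffices hn : n ∈ span ℝ {s, t} by
    obtain ⟨l, m, hlm⟩ := mem_span_pair.1 hn
    exact ⟨l, m, hlm.symm⟩
  have : FiniteDimensional ℝ (span ℝ {s, t}) := .span_of_finite ℝ (toFinite _)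
  rw [← orthogonal_orthogonal (span ℝ {s, t}), mem_orthogonal]
  intro p hp
  rw [mem_orthogonal] at hp
  obtain ⟨c, rfl⟩ := mem_span_singleton.1 <|
    h.mem_span p (hp s (subset_span (by simp))) (hp t (subset_span (by simp)))
  rw [real_inner_comm, inner_smul_right, mem_orthogonal_singleton_iff_inner_right.1 hy, mul_zero]

theorem IsWedge.linealitySpace_le_left (h : IsWedge S y s t) :
    linealitySpace (activeNormals S y) ≤ (ℝ ∙ s)ᗮ := fun _ hv =>
  mem_orthogonal_singleton_iff_inner_right.2 (mem_linealitySpace.1 hv s h.left_mem)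

variable [Fact (finrank ℝ E = 3)]

theorem span_pair_ne_top (x y : E) : span ℝ {x, y} ≠ ⊤ := fun htop => by
  classical
  have hle := finrank_span_finset_le_card (R := ℝ) ({x, y} : Finset E)
  rw [Finset.coe_pair, Set.finrank, htop, finrank_top, (Fact.out : finrank ℝ E = 3)] at hle
  exact absurd (hle.trans Finset.card_le_two) (by norm_num)

theorem exists_span_singleton_sup_span_pair_eq_top (hy : y ≠ 0) (hp : p ∉ ℝ ∙ y) :
    ∃ q, (ℝ ∙ y) ⊔ span ℝ {p, q} = ⊤ := by
  have : FiniteDimensional ℝ E := .of_fact_finrank_eq_succ 2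
  obtain ⟨n, hn, hle⟩ := exists_ne_zero_le_orthogonal (span_pair_ne_top y p)
  have hyp : span ℝ {y, p} = (ℝ ∙ n)ᗮ :=
    (eq_span_singleton_or_eq_orthogonal hn hle (subset_span (by simp)) hy).resolve_left
      fun h => hp (h ▸ subset_span (by simp))
  refine ⟨n, ?_⟩
  rw [span_insert, ← sup_assoc, ← span_insert, hyp, sup_comm]
  exact sup_orthogonal_of_hasOrthogonalProjection

theorem IsEdgeDirection.exists_mem_activeNormals (hy : IsEdgeDirection S y) :
    ∃ s, s ∈ activeNormals S y :=
  exists_mem_activeNormals_of_ne_top <| by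
    simpa [hy.linealitySpace_eq] using span_pair_ne_top y y

theorem IsEdgeDirection.notMem_span (hy : IsEdgeDirection S y) (hp : ∀ s ∈ S, ⟪s, p⟫_ℝ < 0) :
    p ∉ ℝ ∙ y := fun hpy => by
  obtain ⟨s, hs⟩ := hy.exists_mem_activeNormals
  rw [← hy.linealitySpace_eq] at hpy
  exact (hp s (mem_activeNormals.1 hs).1).ne (mem_linealitySpace.1 hpy s hs)

theorem IsSolidAbove.exists_isWedge (hS : IsSolidAbove e S) (hy : IsEdgeDirection S y) :
    ∃ s t, IsWedge S y s t := by
  obtain ⟨p, hp⟩ := hS.exists_interior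
  have hneg : ∀ s ∈ activeNormals S y, ⟪s, p⟫_ℝ < 0 := fun s hs => hp s (mem_activeNormals.1 hs).1
  obtain ⟨r, hr⟩ := hy.exists_mem_activeNormals
  obtain ⟨q, hq⟩ := exists_span_singleton_sup_span_pair_eq_top hy.ne_zero (hy.notMem_span hp)
  obtain ⟨s, hs, t, ht, hiff⟩ := exists_pair_mem_polyhedralCone_iff ⟨r, hr⟩ hneg
    (hy.linealitySpace_eq ▸ hq)
  refine ⟨s, t, hs, ht, hiff, fun v hvs hvt => ?_⟩
  rw [← hy.linealitySpace_eq, mem_linealitySpace]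
  intro r hr
  have hv := (hiff v).2 ⟨hvs.le, hvt.le⟩ r hr
  have hv' := (hiff (-v)).2 ⟨by simp [hvs], by simp [hvt]⟩ r hr
  rw [inner_neg_right] at hv'
  linarith

theorem IsWedge.exists_inner_eq (h : IsWedge S y s t) (a b : ℝ) :
    ∃ p, ⟪s, p⟫_ℝ = a ∧ ⟪t, p⟫_ℝ = b := by
  have hrank : finrank ℝ E = 3 := Fact.out
  have : FiniteDimensional ℝ E := .of_fact_finrank_eq_succ 2
  let F : E →ₗ[ℝ] ℝ × ℝ := (innerₛₗ ℝ s).prod (innerₛₗ ℝ t)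
  have hker : finrank ℝ (LinearMap.ker F) ≤ 1 := by
    refine (Submodule.finrank_mono fun p hp => ?_).trans
      ((finrank_span_le_card {y}).trans (by simp))
    obtain ⟨hps, hpt⟩ := Prod.mk_eq_zero.1 (LinearMap.mem_ker.1 hp)
    exact h.mem_span p hps hpt
  have hrange : LinearMap.range F = ⊤ := eq_top_of_finrank_eq <| by
    have hsum := F.finrank_range_add_finrank_ker
    have hle := finrank_le (LinearMap.range F)
    rw [finrank_prod, finrank_self] at hle ⊢
    omega
  obtain ⟨p, hp⟩ := LinearMap.range_eq_top.1 hrange (a, b)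
  exact ⟨p, Prod.mk.injEq .. ▸ hp⟩

end Wedge

section FacetPoint

variable {E : Type*} [NormedAddCommGroup E] [InnerProductSpace ℝ E]
variable {S : Finset E} {e n p s t v w y z : E} {l m : ℝ}

/-- `w` lies in the relative interior of a facet of the polyhedral cone with normals `S`, and this
facet is orthogonal to `n`. -/
structure IsFacetPoint (S : Finset E) (n w : E) : Prop where
  mem : w ∈ polyhedralCone S
  linealitySpace_eq : linealitySpace (activeNormals S w) = (ℝ ∙ n)ᗮ

theorem IsFacetPoint.mem_orthogonal (hw : IsFacetPoint S n w) : w ∈ (ℝ ∙ n)ᗮ :=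
  hw.linealitySpace_eq ▸ self_mem_linealitySpace S w

theorem IsFacetPoint.smul (hw : IsFacetPoint S n w) {c : ℝ} (hc : 0 < c) :
    IsFacetPoint S n (c • w) :=
  ⟨smul_mem_polyhedralCone hw.mem hc.le, activeNormals_smul S w hc.ne' ▸ hw.linealitySpace_eq⟩

theorem mem_activeNormals_add_iff (hy : y ∈ polyhedralCone S) (hz : z ∈ polyhedralCone S) :
    s ∈ activeNormals S (y + z) ↔ s ∈ activeNormals S y ∧ s ∈ activeNormals S z := by
  simp only [mem_activeNormals, inner_add_right, ← and_and_left]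
  refine and_congr_right fun hs => ⟨fun h => ?_, fun h => by rw [h.1, h.2, add_zero]⟩
  have hsy := hy s hs
  have hsz := hz s hs
  constructor <;> linarith

theorem inner_nonpos_of_mem_activeNormals (hn : ∀ p ∈ polyhedralCone S, ⟪n, p⟫_ℝ ≤ 0)
    (hy : y ∈ polyhedralCone S) (hyn : y ∈ (ℝ ∙ n)ᗮ)
    (hp : p ∈ polyhedralCone (activeNormals S y)) : ⟪n, p⟫_ℝ ≤ 0 := by
  obtain ⟨c, hc, hmem⟩ := exists_pos_add_smul_mem_polyhedralCone hy hp
  have hle := hn _ hmem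
  rw [inner_add_right, inner_smul_right, mem_orthogonal_singleton_iff_inner_right.1 hyn,
    zero_add] at hle
  exact nonpos_of_mul_nonpos_right hle hc

theorem IsSolidAbove.linealitySpace_eq_bot (hS : IsSolidAbove e S) : linealitySpace S = ⊥ := by
  refine eq_bot_iff.2 fun v hv => (mem_bot ℝ).2 ?_
  rw [mem_linealitySpace] at hv
  by_contra hv₀
  have hpos := hS.inner_pos v (fun s hs => (hv s hs).le) hv₀
  have hneg := hS.inner_pos (-v) (fun s hs => by simp [hv s hs]) (neg_ne_zero.2 hv₀)
  rw [inner_neg_right] at hneg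
  linarith

theorem IsSolidAbove.exists_eq_smul_of_isFacetPoint (hS : IsSolidAbove e S)
    (hw : IsFacetPoint S n w) (hs : s ∈ activeNormals S w) : ∃ c ≠ (0 : ℝ), s = c • n := by
  have hsn : (ℝ ∙ n)ᗮ ≤ (ℝ ∙ s)ᗮ := fun v hv => by
    rw [← hw.linealitySpace_eq] at hv
    exact mem_orthogonal_singleton_iff_inner_right.2 (mem_linealitySpace.1 hv s hs)
  rw [orthogonal_le_orthogonal_iff, span_singleton_le_iff_mem] at hsn
  obtain ⟨c, rfl⟩ := mem_span_singleton.1 hsn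
  refine ⟨c, fun hc => ?_, rfl⟩
  obtain ⟨p, hp⟩ := hS.exists_interior
  simpa [hc] using hp _ (mem_activeNormals.1 hs).1

theorem IsSolidAbove.inner_nonneg_or_nonpos_of_isFacetPoint (hS : IsSolidAbove e S) (hn : n ≠ 0)
    (hw : IsFacetPoint S n w) :
    (∀ p ∈ polyhedralCone S, 0 ≤ ⟪n, p⟫_ℝ) ∨ (∀ p ∈ polyhedralCone S, ⟪n, p⟫_ℝ ≤ 0) := by
  obtain ⟨s, hs⟩ := exists_mem_activeNormals_of_ne_top
    (hw.linealitySpace_eq ▸ orthogonal_singleton_ne_top hn)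
  obtain ⟨c, hc, rfl⟩ := hS.exists_eq_smul_of_isFacetPoint hw hs
  have hle (p) (hp : p ∈ polyhedralCone S) : c * ⟪n, p⟫_ℝ ≤ 0 :=
    real_inner_smul_left n p c ▸ hp _ (mem_activeNormals.1 hs).1
  rcases hc.lt_or_gt with hc | hc
  · exact .inl fun p hp => nonneg_of_mul_nonpos_right (hle p hp) hc
  · exact .inr fun p hp => nonpos_of_mul_nonpos_right (hle p hp) hc

theorem IsSolidAbove.mem_polyhedralCone_activeNormals_iff (hS : IsSolidAbove e S) (hn : n ≠ 0)
    (hnS : ∀ p ∈ polyhedralCone S, ⟪n, p⟫_ℝ ≤ 0) (hw : IsFacetPoint S n w) :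
    p ∈ polyhedralCone (activeNormals S w) ↔ ⟪n, p⟫_ℝ ≤ 0 := by
  have key : ∀ s ∈ activeNormals S w, ⟪s, p⟫_ℝ ≤ 0 ↔ ⟪n, p⟫_ℝ ≤ 0 := fun s hs => by
    obtain ⟨c, -, rfl⟩ := hS.exists_eq_smul_of_isFacetPoint hw hs
    obtain ⟨q, hq⟩ := hS.exists_interior
    have hcq : c * ⟪n, q⟫_ℝ < 0 := real_inner_smul_left n q c ▸ hq _ (mem_activeNormals.1 hs).1
    have hc : 0 < c := pos_of_mul_neg_left hcq (hnS q fun s hs => (hq s hs).le)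
    rw [real_inner_smul_left]
    exact ⟨fun h => nonpos_of_mul_nonpos_right h hc,
      fun h => mul_nonpos_of_nonneg_of_nonpos hc.le h⟩
  obtain ⟨s, hs⟩ := exists_mem_activeNormals_of_ne_top
    (hw.linealitySpace_eq ▸ orthogonal_singleton_ne_top hn)
  exact ⟨fun hp => (key s hs).1 (hp s hs), fun hp s hs => (key s hs).2 hp⟩

variable [Fact (finrank ℝ E = 3)]

theorem span_singleton_ne_orthogonal (y : E) (hn : n ≠ 0) : ℝ ∙ y ≠ (ℝ ∙ n)ᗮ := fun h => by
  have hle := finrank_span_le_card (R := ℝ) ({y} : Set E)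
  rw [h, finrank_orthogonal_span_singleton (n := 2) hn] at hle
  simp at hle

theorem IsSolidAbove.ne_zero_of_isFacetPoint (hS : IsSolidAbove e S) (hn : n ≠ 0)
    (hw : IsFacetPoint S n w) : w ≠ 0 := by
  rintro rfl
  have hS₀ : activeNormals S 0 = S := Finset.ext fun s => by simp [mem_activeNormals]
  have hbot := hw.linealitySpace_eq
  rw [hS₀, hS.linealitySpace_eq_bot, ← span_singleton_eq_bot.2 rfl] at hbot
  exact span_singleton_ne_orthogonal 0 hn hbot

theorem IsEdgeDirection.not_isFacetPoint (hy : IsEdgeDirection S y) (hn : n ≠ 0) :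
    ¬ IsFacetPoint S n y := fun h =>
  span_singleton_ne_orthogonal y hn (hy.linealitySpace_eq.symm.trans h.linealitySpace_eq)

theorem IsSolidAbove.notMem_span_of_isFacetPoint (hS : IsSolidAbove e S) (hn : n ≠ 0)
    (hw : IsFacetPoint S n w) (hy : IsEdgeDirection S y) : w ∉ ℝ ∙ y := fun hwy => by
  obtain ⟨c, rfl⟩ := mem_span_singleton.1 hwy
  have hc : c ≠ 0 := fun hc => hS.ne_zero_of_isFacetPoint hn hw (by rw [hc, zero_smul])
  exact hy.not_isFacetPoint hn ⟨hy.mem, activeNormals_smul S y hc ▸ hw.linealitySpace_eq⟩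

-- Leaving `y` in the plane orthogonal to `t`, towards `⟪s, p⟫ < 0`, enters the facet
-- with normal `t`.
theorem IsWedge.exists_isFacetPoint (h : IsWedge S y s t) (hy : y ∈ polyhedralCone S) :
    ∃ w, IsFacetPoint S t w := by
  obtain ⟨p, hsp, htp⟩ := h.exists_inner_eq (-1) 0
  obtain ⟨c, hc, hmem⟩ := exists_pos_add_smul_mem_polyhedralCone hy
    ((h.mem_iff p).2 ⟨by linarith, htp.le⟩)
  have hactive : ∀ r, r ∈ activeNormals S (y + (y + c • p)) ↔ r ∈ activeNormals S y ∧
      ⟪r, p⟫_ℝ = 0 := fun r => by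
    rw [mem_activeNormals_add_iff hy hmem, and_congr_right_iff]
    intro hr
    rw [mem_activeNormals] at hr ⊢
    simp [hr.1, hr.2, inner_add_right, inner_smul_right, hc.ne']
  refine ⟨_, add_mem_polyhedralCone hy hmem, le_antisymm (fun v hv => ?_) fun v hv => ?_⟩
  · exact mem_orthogonal_singleton_iff_inner_right.2
      (mem_linealitySpace.1 hv t ((hactive t).2 ⟨h.right_mem, htp⟩))
  · rw [mem_orthogonal_singleton_iff_inner_right] at hv
    obtain ⟨b, hb⟩ := mem_span_singleton.1 (h.mem_span (v + ⟪s, v⟫_ℝ • p)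
      (by rw [inner_add_right, inner_smul_right, hsp]; ring)
      (by rw [inner_add_right, inner_smul_right, hv, htp]; ring))
    refine mem_linealitySpace.2 fun r hr => ?_
    obtain ⟨hry, hrp⟩ := (hactive r).1 hr
    have hrv := congr(⟪r, $hb⟫_ℝ)
    rw [inner_smul_right, (mem_activeNormals.1 hry).2, inner_add_right, inner_smul_right,
      hrp] at hrv
    linarith

theorem IsWedge.coeff_nonneg (h : IsWedge S y s t) (hy : y ∈ polyhedralCone S)
    (hyn : y ∈ (ℝ ∙ n)ᗮ) (hn : n = l • s + m • t) (hnS : ∀ p ∈ polyhedralCone S, ⟪n, p⟫_ℝ ≤ 0) :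
    0 ≤ l := by
  obtain ⟨p, hsp, htp⟩ := h.exists_inner_eq (-1) 0
  have hle := inner_nonpos_of_mem_activeNormals hnS hy hyn
    ((h.mem_iff p).2 ⟨by linarith, htp.le⟩)
  simp only [hn, inner_add_left, real_inner_smul_left, hsp, htp] at hle
  linarith

theorem IsSolidAbove.exists_isWedge_of_isFacetPoint (hS : IsSolidAbove e S) (hn : n ≠ 0)
    (hnS : ∀ p ∈ polyhedralCone S, ⟪n, p⟫_ℝ ≤ 0) (hw : IsFacetPoint S n w)
    (hy : IsEdgeDirection S y) (hyn : y ∈ (ℝ ∙ n)ᗮ) :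
    ∃ s t, ∃ m > (0 : ℝ), IsWedge S y s t ∧ n = m • t := by
  obtain ⟨s, t, h⟩ := hS.exists_isWedge hy
  obtain ⟨l, m, hlm⟩ := h.exists_eq_smul_add_smul hyn
  have hl := h.coeff_nonneg hy.mem hyn hlm hnS
  have hm := h.symm.coeff_nonneg hy.mem hyn (hlm.trans (add_comm _ _)) hnS
  rcases hl.eq_or_lt with rfl | hl
  · refine ⟨s, t, m, hm.lt_of_ne' fun hm => hn (by simp [hlm, hm]), h, by simpa using hlm⟩
  rcases hm.eq_or_lt with rfl | hm
  · exact ⟨t, s, l, hl, h.symm, by simpa using hlm⟩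
  have hwn := mem_orthogonal_singleton_iff_inner_right.1 hw.mem_orthogonal
  simp only [hlm, inner_add_left, real_inner_smul_left] at hwn
  obtain ⟨hsw, htw⟩ := (h.mem_iff w).1 (polyhedralCone_subset_activeNormals S y hw.mem)
  exact absurd (h.mem_span w (by nlinarith) (by nlinarith))
    (hS.notMem_span_of_isFacetPoint hn hw hy)

end FacetPoint

section TangentCones

variable {E : Type*} [NormedAddCommGroup E] [InnerProductSpace ℝ E]
variable {D V : Set E} {f k : E → ℝ} {L : Submodule ℝ E}
variable {S : Finset E} {e n p s t w y : E} {l m ε : ℝ}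

/-- `u` is constant on the open rays from the origin and at least `1` near some point. The local
convolution of two such functions grows at least like the cube of the distance. -/
structure IsConicBump (u : E → ℝ) : Prop where
  smul : ∀ c : ℝ, 0 < c → ∀ p, u (c • p) = u p
  exists_eventually_one_le : ∃ p, ∀ᶠ q in 𝓝 p, 1 ≤ u q

theorem isConicBump_indicator (hD : ∀ c : ℝ, 0 < c → ∀ p, c • p ∈ D ↔ p ∈ D)
    (hint : (interior D).Nonempty) : IsConicBump (D.indicator 1) where
  smul c hc p := by by_cases hp : p ∈ D <;> simp [hD c hc p, hp]
  exists_eventually_one_le := by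
    obtain ⟨p, hp⟩ := hint
    exact ⟨p, Filter.mem_of_superset (mem_interior_iff_mem_nhds.1 hp) fun q hq => by simp [hq]⟩

theorem IsSolidAbove.isConicBump_coneIndicator (hS : IsSolidAbove e S) (y : E) :
    IsConicBump (coneIndicator (activeNormals S y)) := by
  refine isConicBump_indicator (fun c hc p => forall₂_congr fun s _ => ?_) ?_
  · rw [inner_smul_right, ← not_lt, ← not_lt, mul_pos_iff_of_pos_left hc]
  · obtain ⟨p, hp⟩ := hS.exists_interior
    refine ⟨p, mem_interior_iff_mem_nhds.2 ?_⟩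
    have hnhds := (Filter.eventually_all_finset (activeNormals S y)).2 fun s hs =>
      ((show Continuous fun q => ⟪s, q⟫_ℝ by fun_prop).tendsto p).eventually_le_const
        (hp s (mem_activeNormals.1 hs).1)
    exact hnhds

theorem isOpen_inner_pos (n : E) : IsOpen {p | 0 < ⟪n, p⟫_ℝ} :=
  isOpen_lt continuous_const (by fun_prop)

theorem isOpen_inner_neg (n : E) : IsOpen {p | ⟪n, p⟫_ℝ < 0} :=
  isOpen_lt (by fun_prop) continuous_const

theorem mem_polyhedralCone_singleton : p ∈ polyhedralCone {s} ↔ ⟪s, p⟫_ℝ ≤ 0 := by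
  simp [polyhedralCone]

theorem IsWedge.not_orthogonal_le [Fact (finrank ℝ E = 3)] (h : IsWedge S y s t)
    (hn : n = l • s + m • t) (hm : m ≠ 0) : ¬ (ℝ ∙ s)ᗮ ≤ (ℝ ∙ n)ᗮ := fun hle => by
  obtain ⟨p, hsp, htp⟩ := h.exists_inner_eq 0 1
  have hnp := mem_orthogonal_singleton_iff_inner_right.1
    (hle (mem_orthogonal_singleton_iff_inner_right.2 hsp))
  simp [hn, inner_add_left, real_inner_smul_left, hsp, htp, hm] at hnp

theorem IsWedge.isConicBump_sub [Fact (finrank ℝ E = 3)] (h : IsWedge S y s t) :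
    IsConicBump ({p | ⟪s, p⟫_ℝ ≤ 0 ∧ 0 < ⟪t, p⟫_ℝ}.indicator 1) := by
  refine isConicBump_indicator (fun c hc p => ?_) ?_
  · simp only [mem_ofPred_eq, inner_smul_right, mul_pos_iff_of_pos_left hc, ← not_lt]
  · obtain ⟨p, hsp, htp⟩ := h.exists_inner_eq (-1) 1
    refine ⟨p, mem_interior.2 ⟨{p | ⟪s, p⟫_ℝ < 0 ∧ 0 < ⟪t, p⟫_ℝ}, fun q hq => ⟨hq.1.le, hq.2⟩,
      (isOpen_inner_neg s).inter (isOpen_inner_pos t), ?_⟩⟩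
    simp [hsp, htp]

theorem IsWedge.isConicBump_add [Fact (finrank ℝ E = 3)] (h : IsWedge S y s t) :
    IsConicBump ({p | 0 < ⟪s, p⟫_ℝ ∧ 0 < ⟪t, p⟫_ℝ}.indicator 1) := by
  refine isConicBump_indicator (fun c hc p => ?_) ?_
  · simp only [mem_ofPred_eq, inner_smul_right, mul_pos_iff_of_pos_left hc]
  · obtain ⟨p, hsp, htp⟩ := h.exists_inner_eq 1 1
    exact ⟨p, mem_interior.2 ⟨_, subset_rfl, (isOpen_inner_pos s).inter (isOpen_inner_pos t),
      by simp [hsp, htp]⟩⟩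

theorem activeNormals_subset_of_isFacetPoint (hw : IsFacetPoint S n w) (hyn : y ∈ (ℝ ∙ n)ᗮ) :
    activeNormals S w ⊆ activeNormals S y := fun s hs =>
  mem_activeNormals.2 ⟨(mem_activeNormals.1 hs).1,
    mem_linealitySpace.1 (hw.linealitySpace_eq ▸ hyn) s hs⟩

variable [FiniteDimensional ℝ E] [MeasurableSpace E] [BorelSpace E]

theorem hasOneSidedPart_indicator (hD : MeasurableSet D) (hDn : ∀ p ∈ D, 0 ≤ ⟪n, p⟫_ℝ)
    (hDL : ∀ p, ∀ v ∈ L, p + v ∈ D ↔ p ∈ D) (hk : k ∈ invariantSums (transverseTo n L))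
    (h : ∀ p, f p = k p + ε * D.indicator 1 p) : HasOneSidedPart n ε L f (D.indicator 1) where
  memLp := (memLp_top_const (1 : ℝ)).indicator hD
  nonneg p := indicator_nonneg (fun _ _ => zero_le_one) p
  eq_zero p hp := indicator_of_notMem (fun hpD => hp.not_ge (hDn p hpD)) _
  invariant p v hv := by by_cases hp : p ∈ D <;> simp [hDL p v hv, hp]
  remainder := by
    convert hk using 1
    ext p
    simp [h p]

theorem measurableSet_inner_nonpos (n : E) : MeasurableSet {p | ⟪n, p⟫_ℝ ≤ 0} :=
  measurableSet_le (by fun_prop) measurable_const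

theorem coneIndicator_singleton_mem_invariantSums (hL : L ≤ (ℝ ∙ s)ᗮ)
    (hs : ¬ (ℝ ∙ s)ᗮ ≤ (ℝ ∙ n)ᗮ) : coneIndicator {s} ∈ invariantSums (transverseTo n L) := by
  have hLs : linealitySpace {s} = (ℝ ∙ s)ᗮ := by simp [linealitySpace]
  exact mem_invariantSums ⟨hL, hs⟩ (memLp_coneIndicator _) (hLs ▸ invariantUnder_coneIndicator {s})

theorem one_mem_invariantSums (hn : n ≠ 0) : (1 : E → ℝ) ∈ invariantSums (transverseTo n L) :=
  mem_invariantSums (M := ⊤) ⟨le_top, fun h => orthogonal_singleton_ne_top hn (top_le_iff.1 h)⟩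
    (memLp_top_const 1) fun _ _ _ => rfl

theorem hasOneSidedPart_of_inner_nonneg (hnS : ∀ p ∈ polyhedralCone S, 0 ≤ ⟪n, p⟫_ℝ)
    (hy : y ∈ polyhedralCone S) (hyn : y ∈ (ℝ ∙ n)ᗮ) :
    HasOneSidedPart n 1 (linealitySpace (activeNormals S y)) (coneIndicator (activeNormals S y))
      (coneIndicator (activeNormals S y)) := by
  refine hasOneSidedPart_indicator (isClosed_polyhedralCone _).measurableSet (fun p hp => ?_)
    (fun p v hv => forall₂_congr fun s hs => ?_) (zero_mem _) fun p => by simp [coneIndicator]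
  · have hneg := inner_nonpos_of_mem_activeNormals (n := -n)
      (fun q hq => by simpa using hnS q hq) hy (by simpa [← neg_singleton] using hyn) hp
    simpa using hneg
  · rw [inner_add_right, mem_linealitySpace.1 hv s hs, add_zero]

theorem hasOneSidedPart_of_not_le (ε : ℝ)
    (h : ¬ linealitySpace (activeNormals S y) ≤ (ℝ ∙ n)ᗮ) :
    HasOneSidedPart n ε (linealitySpace (activeNormals S y)) (coneIndicator (activeNormals S y))
      ((∅ : Set E).indicator 1) :=
  hasOneSidedPart_indicator .empty (fun _ hp => hp.elim) (fun _ _ _ => Iff.rfl)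
    (mem_invariantSums ⟨le_rfl, h⟩ (memLp_coneIndicator _) (invariantUnder_coneIndicator _))
    fun p => by simp

theorem IsSolidAbove.hasOneSidedPart_of_isFacetPoint (hS : IsSolidAbove e S) (hn : n ≠ 0)
    (hnS : ∀ p ∈ polyhedralCone S, ⟪n, p⟫_ℝ ≤ 0) (hw : IsFacetPoint S n w) :
    HasOneSidedPart n (-1) (linealitySpace (activeNormals S w)) (coneIndicator (activeNormals S w))
      ({p | 0 < ⟪n, p⟫_ℝ}.indicator 1) := by
  refine hasOneSidedPart_indicator (isOpen_inner_pos n).measurableSet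
    (fun p hp => le_of_lt hp) (fun p v hv => ?_) (one_mem_invariantSums hn) fun p => ?_
  · rw [hw.linealitySpace_eq, mem_orthogonal_singleton_iff_inner_right] at hv
    simp only [mem_ofPred_eq, inner_add_right, hv, add_zero]
  · have hp := hS.mem_polyhedralCone_activeNormals_iff (p := p) hn hnS hw
    rcases le_or_gt ⟪n, p⟫_ℝ 0 with h | h <;>
      simp [coneIndicator, indicator, hp, h, not_le.2, not_lt.2]

/-- Near each nonzero point `y` of the polyhedral cone on the hyperplane orthogonal to `n`, the
indicator function of the cone has a one-sided part of sign `ε`. This part is the indicator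
function of a subset of `V`, and it is a conic bump when `y` spans an edge. -/
def HasOneSidedTangentCones (V : Set E) (n : E) (ε : ℝ) (S : Finset E) : Prop :=
  ∀ y ∈ polyhedralCone S, y ∈ (ℝ ∙ n)ᗮ → y ≠ 0 → ∃ D ⊆ V,
    HasOneSidedPart n ε (linealitySpace (activeNormals S y)) (coneIndicator (activeNormals S y))
      (D.indicator 1) ∧
    (IsEdgeDirection S y → IsConicBump (D.indicator 1))

theorem IsSolidAbove.hasOneSidedTangentCones_of_inner_nonneg (hS : IsSolidAbove e S)
    (hnS : ∀ p ∈ polyhedralCone S, 0 ≤ ⟪n, p⟫_ℝ) :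
    HasOneSidedTangentCones univ n 1 S := fun y hy hyn _ =>
  ⟨polyhedralCone (activeNormals S y), subset_univ _, hasOneSidedPart_of_inner_nonneg hnS hy hyn,
    fun _ => hS.isConicBump_coneIndicator y⟩

variable [Fact (finrank ℝ E = 3)]

-- Removing the wedge from the half-space bounded by its facet with normal `s` leaves
-- a wedge on the nonnegative side.
theorem IsWedge.hasOneSidedPart_sub (h : IsWedge S y s t) (hn : n = l • s + m • t) (hl : l ≤ 0)
    (hm : 0 < m) :
    HasOneSidedPart n (-1) (linealitySpace (activeNormals S y)) (coneIndicator (activeNormals S y))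
      ({p | ⟪s, p⟫_ℝ ≤ 0 ∧ 0 < ⟪t, p⟫_ℝ}.indicator 1) := by
  refine hasOneSidedPart_indicator
    ((measurableSet_inner_nonpos s).inter (isOpen_inner_pos t).measurableSet)
    (fun p hp => ?_) (fun p v hv => ?_)
    (coneIndicator_singleton_mem_invariantSums h.linealitySpace_le_left
      (h.not_orthogonal_le hn hm.ne')) fun p => ?_
  · rw [hn, inner_add_left, real_inner_smul_left, real_inner_smul_left]
    exact add_nonneg (mul_nonneg_of_nonpos_of_nonpos hl hp.1) (mul_nonneg hm.le hp.2.le)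
  · simp only [mem_ofPred_eq, inner_add_right, mem_linealitySpace.1 hv s h.left_mem,
      mem_linealitySpace.1 hv t h.right_mem, add_zero]
  · have hp := h.mem_iff p
    rcases le_or_gt ⟪s, p⟫_ℝ 0 with hs | hs <;> rcases le_or_gt ⟪t, p⟫_ℝ 0 with ht | ht <;>
      simp [coneIndicator, indicator, mem_polyhedralCone_singleton, hp, hs, ht, not_le.2,
        not_lt.2]

-- Inclusion–exclusion for the two half-spaces bounding the wedge.
theorem IsWedge.hasOneSidedPart_add (h : IsWedge S y s t) (hn : n = l • s + m • t) (hl : 0 < l)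
    (hm : 0 < m) :
    HasOneSidedPart n 1 (linealitySpace (activeNormals S y)) (coneIndicator (activeNormals S y))
      ({p | 0 < ⟪s, p⟫_ℝ ∧ 0 < ⟪t, p⟫_ℝ}.indicator 1) := by
  have hn₀ : n ≠ 0 := by
    rintro rfl
    exact h.not_orthogonal_le hn hm.ne' (by simp)
  have hn' := hn.trans (add_comm _ _)
  refine hasOneSidedPart_indicator
    ((isOpen_inner_pos s).measurableSet.inter (isOpen_inner_pos t).measurableSet)
    (fun p hp => ?_) (fun p v hv => ?_)
    (sub_mem (add_mem
      (coneIndicator_singleton_mem_invariantSums h.linealitySpace_le_left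
        (h.not_orthogonal_le hn hm.ne'))
      (coneIndicator_singleton_mem_invariantSums h.symm.linealitySpace_le_left
        (h.symm.not_orthogonal_le hn' hl.ne')))
      (one_mem_invariantSums hn₀)) fun p => ?_
  · rw [hn, inner_add_left, real_inner_smul_left, real_inner_smul_left]
    exact add_nonneg (mul_nonneg hl.le hp.1.le) (mul_nonneg hm.le hp.2.le)
  · simp only [mem_ofPred_eq, inner_add_right, mem_linealitySpace.1 hv s h.left_mem,
      mem_linealitySpace.1 hv t h.right_mem, add_zero]
  · have hp := h.mem_iff p
    rcases le_or_gt ⟪s, p⟫_ℝ 0 with hs | hs <;> rcases le_or_gt ⟪t, p⟫_ℝ 0 with ht | ht <;>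
      simp [coneIndicator, indicator, mem_polyhedralCone_singleton, hp, hs, ht, not_le.2,
        not_lt.2]

theorem IsSolidAbove.hasOneSidedTangentCones_of_forall_isWedge (hS : IsSolidAbove e S)
    (hn : n ≠ 0) (hnf : ∀ w, ¬ IsFacetPoint S n w)
    (hwedge : ∀ y ∈ polyhedralCone S, y ∈ (ℝ ∙ n)ᗮ →
      ∀ (s t : E) (l m : ℝ), IsWedge S y s t →
      n = l • s + m • t → l ≠ 0 → m ≠ 0 → ∃ D : Set E,
        HasOneSidedPart n ε (linealitySpace (activeNormals S y))
          (coneIndicator (activeNormals S y)) (D.indicator 1) ∧ IsConicBump (D.indicator 1)) :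
    HasOneSidedTangentCones univ n ε S := fun y hy hyn hy₀ => by
  have hcoeff {s t : E} {l m : ℝ} (h : IsWedge S y s t) (hlm : n = l • s + m • t) : l ≠ 0 := by
    rintro rfl
    have hm : m ≠ 0 := fun hm => hn (by simp [hlm, hm])
    obtain ⟨w, hw, hwL⟩ := h.exists_isFacetPoint hy
    refine hnf w ⟨hw, hwL.trans ?_⟩
    rw [hlm, zero_smul, zero_add, span_singleton_smul_eq (IsUnit.mk0 m hm)]
  by_cases hle : linealitySpace (activeNormals S y) ≤ (ℝ ∙ n)ᗮ
  · obtain ⟨s, t, h⟩ := hS.exists_isWedge ⟨hy, hy₀, (eq_span_singleton_or_eq_orthogonal hn hle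
      (self_mem_linealitySpace S y) hy₀).resolve_right fun h => hnf y ⟨hy, h⟩⟩
    obtain ⟨l, m, hlm⟩ := h.exists_eq_smul_add_smul hyn
    obtain ⟨D, hD, hbump⟩ := hwedge y hy hyn s t l m h hlm (hcoeff h hlm)
      (hcoeff h.symm (hlm.trans (add_comm _ _)))
    exact ⟨D, subset_univ D, hD, fun _ => hbump⟩
  · refine ⟨∅, empty_subset _, hasOneSidedPart_of_not_le ε hle, fun hedge => (hle ?_).elim⟩
    rw [hedge.linealitySpace_eq]
    exact (span_singleton_le_iff_mem _ _).2 hyn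

theorem IsSolidAbove.exists_hasOneSidedTangentCones (hS : IsSolidAbove e S) (hn : n ≠ 0)
    (hnf : ∀ w, ¬ IsFacetPoint S n w) :
    ∃ ε : ℝ, (ε = 1 ∨ ε = -1) ∧ HasOneSidedTangentCones univ n ε S := by
  by_cases habove : ∀ p ∈ polyhedralCone S, 0 ≤ ⟪n, p⟫_ℝ
  · exact ⟨1, .inl rfl, hS.hasOneSidedTangentCones_of_inner_nonneg habove⟩
  by_cases hbelow : ∀ p ∈ polyhedralCone S, ⟪n, p⟫_ℝ ≤ 0
  · refine ⟨1, .inl rfl, hS.hasOneSidedTangentCones_of_forall_isWedge hn hnf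
      fun y hy hyn s t l m h hlm hl hm => ⟨_, h.hasOneSidedPart_add hlm ?_ ?_, h.isConicBump_add⟩⟩
    · exact (h.coeff_nonneg hy hyn hlm hbelow).lt_of_ne' hl
    · exact (h.symm.coeff_nonneg hy hyn (hlm.trans (add_comm _ _)) hbelow).lt_of_ne' hm
  refine ⟨-1, .inr rfl, hS.hasOneSidedTangentCones_of_forall_isWedge hn hnf
    fun y _ _ s t l m h hlm hl hm => ?_⟩
  rcases hl.lt_or_gt with hl | hl <;> rcases hm.lt_or_gt with hm | hm
  · refine (habove fun p hp => ?_).elim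
    obtain ⟨hsp, htp⟩ := (h.mem_iff p).1 (polyhedralCone_subset_activeNormals S y hp)
    rw [hlm, inner_add_left, real_inner_smul_left, real_inner_smul_left]
    exact add_nonneg (mul_nonneg_of_nonpos_of_nonpos hl.le hsp)
      (mul_nonneg_of_nonpos_of_nonpos hm.le htp)
  · exact ⟨_, h.hasOneSidedPart_sub hlm hl.le hm, h.isConicBump_sub⟩
  · exact ⟨_, h.symm.hasOneSidedPart_sub (hlm.trans (add_comm _ _)) hm.le hl,
      h.symm.isConicBump_sub⟩
  · refine (hbelow fun p hp => ?_).elim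
    obtain ⟨hsp, htp⟩ := (h.mem_iff p).1 (polyhedralCone_subset_activeNormals S y hp)
    rw [hlm, inner_add_left, real_inner_smul_left, real_inner_smul_left]
    exact add_nonpos (mul_nonpos_of_nonneg_of_nonpos hl.le hsp)
      (mul_nonpos_of_nonneg_of_nonpos hm.le htp)

theorem IsSolidAbove.exists_hasOneSidedTangentCones_of_isFacetPoint (hS : IsSolidAbove e S)
    (hn : n ≠ 0) (hw : IsFacetPoint S n w) :
    ∃ (ε : ℝ) (V : Set E), (ε = 1 ∨ ε = -1) ∧
      HasOneSidedPart n ε (linealitySpace (activeNormals S w)) (coneIndicator (activeNormals S w))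
        (V.indicator 1) ∧ HasOneSidedTangentCones V n ε S := by
  rcases hS.inner_nonneg_or_nonpos_of_isFacetPoint hn hw with hnS | hnS
  · refine ⟨1, polyhedralCone (activeNormals S w), .inl rfl,
      hasOneSidedPart_of_inner_nonneg hnS hw.mem hw.mem_orthogonal, fun y hy hyn _ =>
      ⟨polyhedralCone (activeNormals S y), ?_, hasOneSidedPart_of_inner_nonneg hnS hy hyn,
        fun _ => hS.isConicBump_coneIndicator y⟩⟩
    exact fun p hp s hs => hp s (activeNormals_subset_of_isFacetPoint hw hyn hs)
  refine ⟨-1, {p | 0 < ⟪n, p⟫_ℝ}, .inr rfl, hS.hasOneSidedPart_of_isFacetPoint hn hnS hw,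
    fun y hy hyn hy₀ => ?_⟩
  have hle : linealitySpace (activeNormals S y) ≤ (ℝ ∙ n)ᗮ := fun v hv => by
    rw [← hw.linealitySpace_eq]
    exact mem_linealitySpace.2 fun s hs =>
      mem_linealitySpace.1 hv s (activeNormals_subset_of_isFacetPoint hw hyn hs)
  rcases eq_span_singleton_or_eq_orthogonal hn hle (self_mem_linealitySpace S y) hy₀
    with hyL | hyL
  · obtain ⟨s, t, m, hm, h, hnt⟩ :=
      hS.exists_isWedge_of_isFacetPoint hn hnS hw ⟨hy, hy₀, hyL⟩ hyn
    refine ⟨{p | ⟪s, p⟫_ℝ ≤ 0 ∧ 0 < ⟪t, p⟫_ℝ}, fun p hp => ?_,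
      h.hasOneSidedPart_sub (l := 0) (by simpa using hnt) le_rfl hm, fun _ => h.isConicBump_sub⟩
    rw [mem_ofPred_eq, hnt, real_inner_smul_left]
    exact mul_pos hm hp.2
  · exact ⟨_, subset_rfl, hS.hasOneSidedPart_of_isFacetPoint hn hnS ⟨hy, hyL⟩,
      fun hedge => (hedge.not_isFacetPoint hn ⟨hy, hyL⟩).elim⟩

end TangentCones

section OneSidedGerms

theorem eventuallyEq_comp_sub_right {E : Type*} [NormedAddCommGroup E] {w y : E}
    {f g : E → ℝ} (h : f =ᶠ[𝓝 (y - w)] g) :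
    (fun p => f (p - w)) =ᶠ[𝓝 y] fun p => g (p - w) :=
  ((continuous_id.sub continuous_const).tendsto y).eventually h

variable {E : Type*} [NormedAddCommGroup E] [InnerProductSpace ℝ E]
variable {S : Finset E} {e n r w y z : E} {κ ε η : ℝ}

/-- The lineality spaces of the cones with normals in `S` that come within distance `η` of `y`. -/
def nearbyLinealitySpaces (S : Finset E) (η : ℝ) (y : E) : Set (Submodule ℝ E) :=
  {M | ∃ I ⊆ S, M = linealitySpace I ∧ ∃ v ∈ M, ‖y - v‖ ≤ η}

/-- The indicator function of a polyhedral cone minus `κ` times its translate by `w`. -/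
noncomputable def coneDifference (S : Finset E) (κ : ℝ) (w p : E) : ℝ :=
  coneIndicator S p - κ * coneIndicator S (p - w)

theorem linealitySpace_activeNormals_mem_nearbyLinealitySpaces (hyz : ‖y - z‖ ≤ η) :
    linealitySpace (activeNormals S z) ∈ nearbyLinealitySpaces S η y :=
  ⟨_, fun _ hs => (mem_activeNormals.1 hs).1, rfl, z, self_mem_linealitySpace S z, hyz⟩

theorem top_mem_nearbyLinealitySpaces (S : Finset E) (hη : 0 ≤ η) (y : E) :
    ⊤ ∈ nearbyLinealitySpaces S η y :=
  ⟨∅, Finset.empty_subset S, by simp [linealitySpace], y, mem_top, by simpa using hη⟩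

theorem IsSolidAbove.bot_mem_nearbyLinealitySpaces (hS : IsSolidAbove e S) (hy : ‖y‖ ≤ η) :
    ⊥ ∈ nearbyLinealitySpaces S η y :=
  ⟨S, Finset.Subset.refl S, hS.linealitySpace_eq_bot.symm, 0, zero_mem _, by simpa using hy⟩

theorem sub_notMem_polyhedralCone (hw : w ∈ polyhedralCone S) (hy : y ∉ polyhedralCone S) :
    y - w ∉ polyhedralCone S := fun h => hy (sub_add_cancel y w ▸ add_mem_polyhedralCone h hw)

theorem coneDifference_eventuallyEq_of_notMem (hyw : κ = 0 ∨ y - w ∉ polyhedralCone S) :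
    coneDifference S κ w =ᶠ[𝓝 y] coneIndicator S := by
  rcases hyw with rfl | hyw
  · exact .of_forall fun p => by simp [coneDifference]
  · filter_upwards [eventuallyEq_comp_sub_right (coneIndicator_eventuallyEq_zero hyw)] with p hp
    simp only [coneDifference, hp, Pi.zero_apply, mul_zero, sub_zero]

theorem coneDifference_eventuallyEq_zero (hw : w ∈ polyhedralCone S) (hy : y ∉ polyhedralCone S) :
    coneDifference S κ w =ᶠ[𝓝 y] 0 :=
  (coneDifference_eventuallyEq_of_notMem (.inr (sub_notMem_polyhedralCone hw hy))).trans
    (coneIndicator_eventuallyEq_zero hy)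

theorem activeNormals_add_eq_left (hw : w ∈ polyhedralCone S) (hz : z ∈ polyhedralCone S)
    (hwz : activeNormals S w ⊆ activeNormals S z) :
    activeNormals S (w + z) = activeNormals S w :=
  Finset.ext fun _ => (mem_activeNormals_add_iff hw hz).trans ⟨And.left, fun hs => ⟨hs, hwz hs⟩⟩

theorem coneDifference_eventuallyEq_of_mem (hw : w ∈ polyhedralCone S)
    (hz : z ∈ polyhedralCone S) (κ : ℝ) :
    coneDifference S κ w =ᶠ[𝓝 (w + z)] fun p =>
      coneIndicator (activeNormals S (w + z)) p -
        κ * coneIndicator (activeNormals S z) (p - w) := by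
  have hz' : coneIndicator S =ᶠ[𝓝 (w + z - w)] coneIndicator (activeNormals S z) := by
    rw [add_sub_cancel_left]
    exact coneIndicator_eventuallyEq_of_mem hz
  filter_upwards [coneIndicator_eventuallyEq_of_mem (add_mem_polyhedralCone hw hz),
    eventuallyEq_comp_sub_right hz'] with p hp hpw
  rw [coneDifference, hp, hpw]

theorem coneIndicator_activeNormals_sub (S : Finset E)
    (h : w ∈ linealitySpace (activeNormals S y)) (p : E) :
    coneIndicator (activeNormals S y) (p - w) = coneIndicator (activeNormals S y) p := by
  simpa [sub_eq_add_neg] using invariantUnder_coneIndicator _ p (-w) (neg_mem h)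

theorem exists_coneDifference_one_eventuallyEq_const (hw : w ∈ polyhedralCone S)
    (hwn : w ∈ (ℝ ∙ n)ᗮ) (hwη : ‖w‖ ≤ η)
    (hM : ∀ M ∈ nearbyLinealitySpaces S η y, (ℝ ∙ n)ᗮ ≤ M) :
    ∃ c : ℝ, coneDifference S 1 w =ᶠ[𝓝 y] fun _ => c := by
  refine ⟨0, ?_⟩
  have hinner (l : ℝ) (hl : l ∈ Icc (0 : ℝ) 1) (s) (hs : s ∈ activeNormals S (y + l • -w)) :
      ⟪s, w⟫_ℝ = 0 := by
    refine mem_linealitySpace.1 (hM _ (linealitySpace_activeNormals_mem_nearbyLinealitySpaces ?_)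
      hwn) s hs
    rw [sub_add_cancel_left, norm_neg, norm_smul, norm_neg, Real.norm_of_nonneg hl.1]
    exact (mul_le_of_le_one_left (norm_nonneg w) hl.2).trans hwη
  by_cases hy : y ∈ polyhedralCone S
  · obtain ⟨z, rfl⟩ : ∃ z, y = w + z := ⟨y - w, (add_sub_cancel w y).symm⟩
    have hz : z ∈ polyhedralCone S := by
      by_contra hz
      obtain ⟨l, hl, -, s, hs, hsw⟩ := exists_exit_of_add_notMem (z := -w) hy (by simpa using hz)
      rw [inner_neg_right, hinner l ⟨hl.1, hl.2.le⟩ s hs, neg_zero] at hsw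
      exact hsw.false
    have hact : activeNormals S (z + w) = activeNormals S z :=
      activeNormals_add_eq_left hz hw fun s hs => mem_activeNormals.2 ⟨(mem_activeNormals.1 hs).1,
        hinner 1 (right_mem_Icc.2 zero_le_one) s (by simpa using hs)⟩
    have hwz : w ∈ linealitySpace (activeNormals S z) := mem_linealitySpace.2 fun s hs =>
      hinner 0 (left_mem_Icc.2 zero_le_one) s (by rwa [zero_smul, add_zero, add_comm, hact])
    filter_upwards [coneDifference_eventuallyEq_of_mem hw hz 1] with p hp
    rw [hp, add_comm w z, hact, coneIndicator_activeNormals_sub S hwz, one_mul, sub_self]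
  · exact coneDifference_eventuallyEq_zero hw hy

theorem IsSolidAbove.sub_notMem_of_isEdgeDirection [Fact (finrank ℝ E = 3)]
    (hS : IsSolidAbove e S) (hn : n ≠ 0)
    (hw : IsFacetPoint S n w) (hr : IsEdgeDirection S r) : r - w ∉ polyhedralCone S := fun hz => by
  refine hS.notMem_span_of_isFacetPoint hn hw hr ?_
  rw [← hr.linealitySpace_eq]
  refine mem_linealitySpace.2 fun s hs => ?_
  rw [← add_sub_cancel w r] at hs
  exact (mem_activeNormals.1 ((mem_activeNormals_add_iff hw.mem hz).1 hs).1).2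

variable [FiniteDimensional ℝ E] [MeasurableSpace E] [BorelSpace E]
variable {L L' : Submodule ℝ E} {f g u u' : E → ℝ} {D V : Set E}

theorem memLp_coneDifference (S : Finset E) (κ : ℝ) (w : E) : MemLp (coneDifference S κ w) ∞ :=
  (memLp_coneIndicator S).sub ((memLp_top_comp_sub_right (memLp_coneIndicator S) w).const_mul κ)

theorem invariantSums_mono {𝓜 𝓛 : Set (Submodule ℝ E)} (h : 𝓜 ⊆ 𝓛) :
    invariantSums 𝓜 ≤ invariantSums 𝓛 :=
  span_mono fun _ ⟨hf, M, hM, hfM⟩ => ⟨hf, M, h hM, hfM⟩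

theorem comp_sub_right_mem_invariantSums {𝓜 : Set (Submodule ℝ E)} (hf : f ∈ invariantSums 𝓜)
    (w : E) : (fun p => f (p - w)) ∈ invariantSums 𝓜 := by
  induction hf using span_induction with
  | mem f hf =>
    obtain ⟨hf, M, hM, hfM⟩ := hf
    exact mem_invariantSums hM (memLp_top_comp_sub_right hf w) (hfM.comp_sub_right w)
  | zero => exact zero_mem _
  | add f g _ _ hf hg => exact add_mem hf hg
  | smul c f _ hf => exact smul_mem _ c hf

theorem hasOneSidedPart_zero (n : E) (ε : ℝ) (L : Submodule ℝ E) :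
    HasOneSidedPart n ε L 0 0 where
  memLp := MemLp.zero
  nonneg _ := le_rfl
  eq_zero _ _ := rfl
  invariant _ _ _ := rfl
  remainder := by simp

theorem HasOneSidedPart.sub (hf : HasOneSidedPart n ε L f u) (hg : HasOneSidedPart n ε L' g u')
    (hLL' : L' ≤ L) (huu' : ∀ p, u' p ≤ u p) : HasOneSidedPart n ε L' (f - g) (u - u') where
  memLp := hf.memLp.sub hg.memLp
  nonneg p := sub_nonneg.2 (huu' p)
  eq_zero p hp := by simp [hf.eq_zero p hp, hg.eq_zero p hp]
  invariant p v hv := by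
    simp only [Pi.sub_apply, hf.invariant p v (hLL' hv), hg.invariant p v hv]
  remainder := by
    have hmono : transverseTo n L ⊆ transverseTo n L' := fun M hM => ⟨hLL'.trans hM.1, hM.2⟩
    convert sub_mem (invariantSums_mono hmono hf.remainder) hg.remainder using 1
    rw [smul_sub, sub_sub_sub_comm]

theorem HasOneSidedPart.comp_sub_right (hf : HasOneSidedPart n ε L f u) (hw : w ∈ (ℝ ∙ n)ᗮ) :
    HasOneSidedPart n ε L (fun p => f (p - w)) fun p => u (p - w) where
  memLp := memLp_top_comp_sub_right hf.memLp w
  nonneg p := hf.nonneg _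
  eq_zero p hp := hf.eq_zero _ <| by
    rwa [inner_sub_right, mem_orthogonal_singleton_iff_inner_right.1 hw, sub_zero]
  invariant := hf.invariant.comp_sub_right w
  remainder := comp_sub_right_mem_invariantSums hf.remainder w

/-- `f` is locally of the form required to compute convolutions near points of the hyperplane
orthogonal to `n`: a sum of invariant functions away from the hyperplane, with a one-sided part
of sign `ε` on it. The invariance directions are those of the faces of the cone with normals `S`,
up to an error `η` in the position. -/
structure HasOneSidedGerms (S : Finset E) (n : E) (ε η : ℝ) (f : E → ℝ) : Prop where
  memLp : MemLp f ∞
  transverse : ∀ y ∉ (ℝ ∙ n)ᗮ, ∃ k ∈ invariantSums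
    {M | M ∈ nearbyLinealitySpaces S η y ∧ ¬ M ≤ (ℝ ∙ n)ᗮ}, f =ᶠ[𝓝 y] k
  flat : ∀ y ∈ (ℝ ∙ n)ᗮ, η < ‖y‖ → ∃ M ∈ nearbyLinealitySpaces S η y, ∃ g u,
    f =ᶠ[𝓝 y] g ∧ HasOneSidedPart n ε M g u
  locally_constant : ∀ y, (∀ M ∈ nearbyLinealitySpaces S η y, (ℝ ∙ n)ᗮ ≤ M) →
    ∃ c : ℝ, f =ᶠ[𝓝 y] fun _ => c
  edge : ∀ r ∈ (ℝ ∙ n)ᗮ, IsEdgeDirection S r → ∃ g u, f =ᶠ[𝓝 r] g ∧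
    HasOneSidedPart n ε (linealitySpace (activeNormals S r)) g u ∧ IsConicBump u

theorem exists_transverse_germ_coneDifference (hwn : w ∈ (ℝ ∙ n)ᗮ) (hwη : ‖w‖ ≤ η) (κ : ℝ)
    (hy : y ∉ (ℝ ∙ n)ᗮ) : ∃ k ∈ invariantSums
      {M | M ∈ nearbyLinealitySpaces S η y ∧ ¬ M ≤ (ℝ ∙ n)ᗮ}, coneDifference S κ w =ᶠ[𝓝 y] k := by
  have hgerm (z) (hz : z ∉ (ℝ ∙ n)ᗮ) (hyz : ‖y - z‖ ≤ η) : ∃ k ∈ invariantSums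
      {M | M ∈ nearbyLinealitySpaces S η y ∧ ¬ M ≤ (ℝ ∙ n)ᗮ}, coneIndicator S =ᶠ[𝓝 z] k := by
    obtain ⟨k, hk, heq⟩ := exists_germ_coneIndicator S z
    refine ⟨k, invariantSums_mono ?_ hk, heq⟩
    rintro _ ⟨-, rfl⟩
    exact ⟨linealitySpace_activeNormals_mem_nearbyLinealitySpaces hyz,
      fun hle => hz (hle (self_mem_linealitySpace S z))⟩
  obtain ⟨k, hk, hyk⟩ := hgerm y hy (by simpa using (norm_nonneg w).trans hwη)
  obtain ⟨k', hk', hyk'⟩ := hgerm (y - w) (fun h => hy (sub_add_cancel y w ▸ add_mem h hwn))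
    (by simpa using hwη)
  refine ⟨_, sub_mem hk (smul_mem _ κ (comp_sub_right_mem_invariantSums hk' w)), ?_⟩
  filter_upwards [hyk, eventuallyEq_comp_sub_right hyk'] with p hp hp'
  simp only [coneDifference, hp, hp', Pi.sub_apply, Pi.smul_apply, smul_eq_mul]

theorem exists_flat_germ_of_notMem (hw : w ∈ polyhedralCone S) (hη : 0 ≤ η) (n : E) (κ ε : ℝ)
    (hy : y ∉ polyhedralCone S) : ∃ M ∈ nearbyLinealitySpaces S η y, ∃ g u,
      coneDifference S κ w =ᶠ[𝓝 y] g ∧ HasOneSidedPart n ε M g u :=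
  ⟨⊤, top_mem_nearbyLinealitySpaces S hη y, 0, 0, coneDifference_eventuallyEq_zero hw hy,
    hasOneSidedPart_zero n ε ⊤⟩

theorem HasOneSidedTangentCones.exists_germ (h : HasOneSidedTangentCones V n ε S)
    (hyn : y ∈ (ℝ ∙ n)ᗮ) (hy₀ : y ≠ 0) (hy : y ∈ polyhedralCone S)
    (hyw : κ = 0 ∨ y - w ∉ polyhedralCone S) : ∃ g u, coneDifference S κ w =ᶠ[𝓝 y] g ∧
      HasOneSidedPart n ε (linealitySpace (activeNormals S y)) g u ∧
      (IsEdgeDirection S y → IsConicBump u) := by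
  obtain ⟨D, -, hD, hbump⟩ := h y hy hyn hy₀
  exact ⟨_, _, (coneDifference_eventuallyEq_of_notMem hyw).trans
    (coneIndicator_eventuallyEq_of_mem hy), hD, hbump⟩

theorem hasOneSidedGerms_coneDifference_zero (h : HasOneSidedTangentCones V n ε S)
    (hnf : ∀ w, ¬ IsFacetPoint S n w) (hη : 0 < η) :
    HasOneSidedGerms S n ε η (coneDifference S 0 0) where
  memLp := memLp_coneDifference S 0 0
  transverse y := exists_transverse_germ_coneDifference (zero_mem _) (by simpa using hη.le) 0
  flat y hyn hyη := by
    have hyy : ‖y - y‖ ≤ η := by simpa using hη.le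
    by_cases hy : y ∈ polyhedralCone S
    · obtain ⟨g, u, hg, hgu, -⟩ := h.exists_germ hyn (norm_pos_iff.1 (hη.trans hyη)) hy (.inl rfl)
      exact ⟨_, linealitySpace_activeNormals_mem_nearbyLinealitySpaces hyy, g, u, hg, hgu⟩
    · exact exists_flat_germ_of_notMem (zero_mem_polyhedralCone S) hη.le n 0 ε hy
  locally_constant y hM := by
    have hyy : ‖y - y‖ ≤ η := by simpa using hη.le
    by_cases hy : y ∈ polyhedralCone S
    · have hle := hM _ (linealitySpace_activeNormals_mem_nearbyLinealitySpaces hyy)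
      have htop : linealitySpace (activeNormals S y) = ⊤ :=
        eq_top_of_orthogonal_le hle fun hge => hnf y ⟨hy, hge.antisymm hle⟩
      refine ⟨coneIndicator (activeNormals S y) 0, ?_⟩
      filter_upwards [coneIndicator_eventuallyEq_of_mem hy] with p hp
      simpa [coneDifference, hp] using
        invariantUnder_coneIndicator (activeNormals S y) 0 p (htop ▸ mem_top)
    · exact ⟨0, coneDifference_eventuallyEq_zero (zero_mem_polyhedralCone S) hy⟩
  edge r hrn hr := by
    obtain ⟨g, u, hg, hgu, hu⟩ := h.exists_germ hrn hr.ne_zero hr.mem (.inl rfl)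
    exact ⟨g, u, hg, hgu, hu hr⟩

theorem exists_flat_germ_of_isFacetPoint
    (hw : IsFacetPoint S n w) (hwη : ‖w‖ ≤ η)
    (hV : HasOneSidedPart n ε (linealitySpace (activeNormals S w))
      (coneIndicator (activeNormals S w)) (V.indicator 1))
    (h : HasOneSidedTangentCones V n ε S) (hyn : y ∈ (ℝ ∙ n)ᗮ) (hyη : η < ‖y‖) :
    ∃ M ∈ nearbyLinealitySpaces S η y, ∃ g u,
      coneDifference S 1 w =ᶠ[𝓝 y] g ∧ HasOneSidedPart n ε M g u := by
  have hη := (norm_nonneg w).trans hwη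
  by_cases hy : y ∈ polyhedralCone S
  swap
  · exact exists_flat_germ_of_notMem hw.mem hη n 1 ε hy
  by_cases hz : y - w ∈ polyhedralCone S
  · obtain ⟨z, rfl⟩ : ∃ z, y = w + z := ⟨y - w, (add_sub_cancel w y).symm⟩
    rw [add_sub_cancel_left] at hz
    have hzn : z ∈ (ℝ ∙ n)ᗮ := by simpa using sub_mem hyn hw.mem_orthogonal
    have hz₀ : z ≠ 0 := fun hz₀ => by simp only [hz₀, add_zero] at hyη; exact hyη.not_ge hwη
    have hwz := activeNormals_subset_of_isFacetPoint hw hzn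
    obtain ⟨D, hDV, hD, -⟩ := h z hz hzn hz₀
    have hle : linealitySpace (activeNormals S z) ≤ linealitySpace (activeNormals S w) :=
      fun v hv => mem_linealitySpace.2 fun s hs => mem_linealitySpace.1 hv s (hwz hs)
    refine ⟨_, linealitySpace_activeNormals_mem_nearbyLinealitySpaces (by simpa using hwη), _, _,
      ?_, (hV.sub hD hle fun p => indicator_le_indicator_of_subset hDV
        (fun _ => zero_le_one) p).comp_sub_right hw.mem_orthogonal⟩
    filter_upwards [coneDifference_eventuallyEq_of_mem hw.mem hz 1] with p hp
    rw [hp, activeNormals_add_eq_left hw.mem hz hwz, one_mul, Pi.sub_apply,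
      coneIndicator_activeNormals_sub S (self_mem_linealitySpace S w)]
  · obtain ⟨g, u, hg, hgu, -⟩ :=
      h.exists_germ hyn (norm_pos_iff.1 (hη.trans_lt hyη)) hy (.inr hz)
    exact ⟨_, linealitySpace_activeNormals_mem_nearbyLinealitySpaces (z := y) (by simpa using hη),
      g, u, hg, hgu⟩

variable [Fact (finrank ℝ E = 3)]

theorem IsSolidAbove.hasOneSidedGerms_of_isFacetPoint (hS : IsSolidAbove e S) (hn : n ≠ 0)
    (hw : IsFacetPoint S n w) (hwη : ‖w‖ ≤ η)
    (hV : HasOneSidedPart n ε (linealitySpace (activeNormals S w))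
      (coneIndicator (activeNormals S w)) (V.indicator 1))
    (h : HasOneSidedTangentCones V n ε S) :
    HasOneSidedGerms S n ε η (coneDifference S 1 w) where
  memLp := memLp_coneDifference S 1 w
  transverse y := exists_transverse_germ_coneDifference hw.mem_orthogonal hwη 1
  flat y := exists_flat_germ_of_isFacetPoint hw hwη hV h
  locally_constant y :=
    exists_coneDifference_one_eventuallyEq_const hw.mem hw.mem_orthogonal hwη
  edge r hrn hr := by
    obtain ⟨g, u, hg, hgu, hu⟩ := h.exists_germ hrn hr.ne_zero hr.mem
      (.inr (hS.sub_notMem_of_isEdgeDirection hn hw hr))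
    exact ⟨g, u, hg, hgu, hu hr⟩

-- If the hyperplane contains a facet, subtracting a small translate of the cone along the facet
-- cancels the part of the indicator function that jumps across the facet.
theorem IsSolidAbove.exists_hasOneSidedGerms (hS : IsSolidAbove e S) (hn : n ≠ 0) (hη : 0 < η) :
    ∃ κ ε : ℝ, ∃ w ∈ polyhedralCone S, ‖w‖ ≤ η ∧ (ε = 1 ∨ ε = -1) ∧
      HasOneSidedGerms S n ε η (coneDifference S κ w) := by
  by_cases hnf : ∀ w, ¬ IsFacetPoint S n w
  · obtain ⟨ε, hε, h⟩ := hS.exists_hasOneSidedTangentCones hn hnf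
    exact ⟨0, ε, 0, zero_mem_polyhedralCone S, by simpa using hη.le, hε,
      hasOneSidedGerms_coneDifference_zero h hnf hη⟩
  · push Not at hnf
    obtain ⟨w₀, hw₀⟩ := hnf
    have hpos := norm_pos_iff.2 (hS.ne_zero_of_isFacetPoint hn hw₀)
    have hw := hw₀.smul (div_pos hη hpos)
    obtain ⟨ε, V, hε, hV, h⟩ := hS.exists_hasOneSidedTangentCones_of_isFacetPoint hn hw
    have hwη : ‖(η / ‖w₀‖) • w₀‖ ≤ η := by
      rw [norm_smul, Real.norm_of_nonneg (div_pos hη hpos).le, div_mul_cancel₀ _ hpos.ne']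
    exact ⟨1, ε, _, hw.mem, hwη, hε, hS.hasOneSidedGerms_of_isFacetPoint hn hw hwη hV h⟩

end OneSidedGerms

section GenericPoint

variable {E : Type*} [NormedAddCommGroup E] [InnerProductSpace ℝ E] [FiniteDimensional ℝ E]
variable {S T : Finset E} {e n r t x x₀ y z : E} {Q M M' : Submodule ℝ E} {η : ℝ}

theorem eventually_add_smul_add_sq_smul_notMem (hrt : ¬ (r ∈ Q ∧ t ∈ Q)) (x : E) :
    ∀ᶠ a : ℝ in 𝓝[>] 0, x + a • r + a ^ 2 • t ∉ Q := by
  contrapose! hrt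
  have hlim {f : ℝ → E} (hf : Continuous f) (hmem : ∃ᶠ a in 𝓝[>] 0, f a ∈ Q) : f 0 ∈ Q :=
    Q.closed_of_finiteDimensional.mem_of_frequently_of_tendsto hmem
      ((hf.tendsto 0).mono_left nhdsWithin_le_nhds)
  have hx : x ∈ Q := by simpa using hlim (by fun_prop) hrt
  have hr : r ∈ Q := by
    have hmem : ∃ᶠ a : ℝ in 𝓝[>] 0, r + a • t ∈ Q := by
      refine (hrt.and_eventually self_mem_nhdsWithin).mono fun a ⟨hmem, ha⟩ => ?_
      refine (Q.smul_mem_iff (ne_of_gt ha)).1 ((Q.add_mem_iff_right hx).1 ?_)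
      convert hmem using 1
      module
    simpa using hlim (by fun_prop) hmem
  obtain ⟨a, hmem, ha⟩ := (hrt.and_eventually self_mem_nhdsWithin).exists
  refine ⟨hr, (Q.smul_mem_iff (pow_ne_zero 2 (ne_of_gt ha))).1 ?_⟩
  exact (Q.add_mem_iff_right (add_mem hx (Q.smul_mem a hr))).1 hmem

theorem eventually_forall_sub_notMem (hx : x ∉ Q) :
    ∀ᶠ η : ℝ in 𝓝[>] 0, ∀ v v' : E, ‖v‖ ≤ η → ‖v'‖ ≤ η → x - (v + v') ∉ Q := by
  obtain ⟨δ, hδ, hball⟩ := Metric.isOpen_iff.1 Q.closed_of_finiteDimensional.isOpen_compl x hx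
  filter_upwards [Ioo_mem_nhdsGT (half_pos hδ)] with η hη v v' hv hv'
  refine hball ?_
  rw [Metric.mem_ball, dist_self_sub_left]
  linarith [norm_add_le v v', hη.2]

/-- No sum of a point near a face of the cone with normals `S` and a point near a face of the cone
with normals `T` equals `x₀`, unless the linear hulls of the faces span the hyperplane
orthogonal to `n`. -/
structure IsGenericSum (S T : Finset E) (n : E) (η : ℝ) (x₀ : E) : Prop where
  mem : x₀ ∈ (ℝ ∙ n)ᗮ
  orthogonal_le_sup : ∀ y z, y + z = x₀ → ∀ M ∈ nearbyLinealitySpaces S η y,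
    ∀ M' ∈ nearbyLinealitySpaces T η z, (ℝ ∙ n)ᗮ ≤ M ⊔ M'

theorem eventually_isGenericSum (S T : Finset E) (hx : x ∈ (ℝ ∙ n)ᗮ)
    (hrt : span ℝ {r, t} = (ℝ ∙ n)ᗮ) :
    ∀ᶠ a : ℝ in 𝓝[>] 0, ∀ᶠ η in 𝓝[>] 0,
      IsGenericSum S T n η (x + a • r + a ^ 2 • t) := by
  have havoid : ∀ᶠ a : ℝ in 𝓝[>] 0, ∀ I ∈ S.powerset, ∀ J ∈ T.powerset,
      (ℝ ∙ n)ᗮ ≤ linealitySpace I ⊔ linealitySpace J ∨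
        x + a • r + a ^ 2 • t ∉ linealitySpace I ⊔ linealitySpace J := by
    refine (Filter.eventually_all_finset _).2 fun I _ =>
      (Filter.eventually_all_finset _).2 fun J _ => ?_
    by_cases hmem : r ∈ linealitySpace I ⊔ linealitySpace J ∧
        t ∈ linealitySpace I ⊔ linealitySpace J
    · exact .of_forall fun _ => .inl (hrt ▸ span_le.2 (pair_subset hmem.1 hmem.2))
    · exact (eventually_add_smul_add_sq_smul_notMem hmem x).mono fun _ => .inr
  filter_upwards [havoid] with a ha
  have hnear : ∀ᶠ η : ℝ in 𝓝[>] 0, ∀ I ∈ S.powerset, ∀ J ∈ T.powerset,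
      (ℝ ∙ n)ᗮ ≤ linealitySpace I ⊔ linealitySpace J ∨ ∀ v v' : E, ‖v‖ ≤ η → ‖v'‖ ≤ η →
        x + a • r + a ^ 2 • t - (v + v') ∉ linealitySpace I ⊔ linealitySpace J :=
    (Filter.eventually_all_finset _).2 fun I hI => (Filter.eventually_all_finset _).2 fun J hJ =>
      (ha I hI J hJ).elim (fun h => .of_forall fun _ => .inl h)
        fun h => (eventually_forall_sub_notMem h).mono fun _ => .inr
  have hr : r ∈ (ℝ ∙ n)ᗮ := hrt ▸ subset_span (mem_insert r {t})
  have ht : t ∈ (ℝ ∙ n)ᗮ := hrt ▸ subset_span (mem_insert_of_mem r rfl)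
  filter_upwards [hnear] with η hη
  refine ⟨add_mem (add_mem hx (smul_mem _ a hr)) (smul_mem _ _ ht), ?_⟩
  rintro y z hyz _ ⟨I, hI, rfl, v, hv, hyv⟩ _ ⟨J, hJ, rfl, v', hv', hzv'⟩
  refine (hη I (Finset.mem_powerset.2 hI) J (Finset.mem_powerset.2 hJ)).resolve_right fun h => ?_
  refine h _ _ hyv hzv' ?_
  convert add_mem_sup hv hv' using 1
  rw [← hyz]
  abel

variable [MeasurableSpace E] [BorelSpace E]
variable {f h : E → ℝ} {ε ε' : ℝ}

theorem locallyOneSided_of_eventuallyEq_const {c : ℝ} (hf : MemLp f ∞)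
    (hh : h =ᶠ[𝓝 z] fun _ => c) : LocallyOneSided ε n f h y z :=
  locallyOneSided_of_mem_invariantSums (𝓜 := {⊥}) (𝓛 := {⊤}) .rfl hh
    (mem_invariantSums rfl hf fun p v hv => by rw [(mem_bot ℝ).1 hv, add_zero])
    (mem_invariantSums rfl (memLp_top_const c) fun _ _ _ => rfl)
    fun M _ L hL => by rw [hL, sup_top_eq]

theorem locallyOneSided_of_eventuallyEq_const_left {c : ℝ} (hh : MemLp h ∞)
    (hf : f =ᶠ[𝓝 y] fun _ => c) : LocallyOneSided ε n f h y z :=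
  locallyOneSided_of_mem_invariantSums (𝓜 := {⊤}) (𝓛 := {⊥}) hf .rfl
    (mem_invariantSums rfl (memLp_top_const c) fun _ _ _ => rfl)
    (mem_invariantSums rfl hh fun p v hv => by rw [(mem_bot ℝ).1 hv, add_zero])
    fun M hM L _ => by rw [hM, top_sup_eq]

theorem HasOneSidedGerms.locallyOneSided (hS : IsSolidAbove e S) (hT : IsSolidAbove e T)
    (hf : HasOneSidedGerms S n ε η f) (hh : HasOneSidedGerms T n ε' η h)
    (hx₀ : IsGenericSum S T n η x₀) (y : E) :
    LocallyOneSided (ε * ε') n f h y (x₀ - y) := by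
  have hle : ∀ M ∈ nearbyLinealitySpaces S η y, ∀ M' ∈ nearbyLinealitySpaces T η (x₀ - y),
      (ℝ ∙ n)ᗮ ≤ M ⊔ M' := hx₀.orthogonal_le_sup y (x₀ - y) (add_sub_cancel y x₀)
  by_cases hy : y ∈ (ℝ ∙ n)ᗮ
  swap
  · obtain ⟨k, hk, hfk⟩ := hf.transverse y hy
    obtain ⟨k', hk', hhk'⟩ := hh.transverse (x₀ - y) fun h => hy (by simpa using sub_mem hx₀.mem h)
    exact locallyOneSided_of_mem_invariantSums hfk hhk' hk hk' fun M hM M' hM' =>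
      eq_top_of_orthogonal_le (hle M hM.1 M' hM'.1) fun h => hM.2 (le_sup_left.trans h)
  rcases le_or_gt ‖y‖ η with hyη | hyη
  · obtain ⟨c, hc⟩ := hh.locally_constant (x₀ - y) fun M' hM' =>
      bot_sup_eq M' ▸ hle ⊥ (hS.bot_mem_nearbyLinealitySpaces hyη) M' hM'
    exact locallyOneSided_of_eventuallyEq_const hf.memLp hc
  rcases le_or_gt ‖x₀ - y‖ η with hzη | hzη
  · obtain ⟨c, hc⟩ := hf.locally_constant y fun M hM =>
      sup_bot_eq M ▸ hle M hM ⊥ (hT.bot_mem_nearbyLinealitySpaces hzη)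
    exact locallyOneSided_of_eventuallyEq_const_left hh.memLp hc
  obtain ⟨M, hM, g, u, hfg, hgu⟩ := hf.flat y hy hyη
  obtain ⟨M', hM', k, u', hhk, hku'⟩ := hh.flat (x₀ - y) (sub_mem hx₀.mem hy) hzη
  exact locallyOneSided_of_eventuallyEq hfg hhk fun φ hφ =>
    hgu.localConv_mem_oneSided hku' (hle M hM M' hM') hφ _

end GenericPoint

section FlatFunctions

variable {ψ : ℝ → ℝ} {k : ℕ}

theorem isLittleO_pow_of_eq_zero_of_neg (hψ : ContDiffAt ℝ k ψ 0) (hneg : ∀ s < 0, ψ s = 0) :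
    ψ =o[𝓝 0] fun s => s ^ k := by
  obtain ⟨v, hv, hψv⟩ := hψ.contDiffOn le_rfl (by simp)
  obtain ⟨δ, hδ, hball⟩ := Metric.mem_nhds_iff.1 hv
  have hψδ : ContDiffOn ℝ k ψ (Metric.ball 0 δ) := hψv.mono hball
  have hδ₀ : Metric.ball 0 δ ∈ 𝓝 (0 : ℝ) := Metric.ball_mem_nhds 0 hδ
  have hderiv (i : ℕ) (hi : i ≤ k) : iteratedDerivWithin i ψ (Metric.ball 0 δ) 0 = 0 := by
    have hcont := (hψδ.continuousOn_iteratedDerivWithin (Nat.cast_le.2 hi)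
      Metric.isOpen_ball.uniqueDiffOn).continuousAt hδ₀
    refine tendsto_nhds_unique (hcont.tendsto.mono_left (nhdsWithin_le_nhds (s := Iio 0)))
      (tendsto_const_nhds.congr' ?_)
    filter_upwards [self_mem_nhdsWithin, nhdsWithin_le_nhds hδ₀] with s hs hsδ
    have hzero : ψ =ᶠ[𝓝 s] fun _ => 0 := Filter.mem_of_superset (Iio_mem_nhds hs) hneg
    rw [iteratedDerivWithin_of_isOpen Metric.isOpen_ball hsδ, hzero.iteratedDeriv_eq]
    simp
  have htaylor := taylor_isLittleO (convex_ball 0 δ) (Metric.mem_ball_self hδ) hψδ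
  have hpoly (s : ℝ) : taylorWithinEval ψ k (Metric.ball 0 δ) 0 s = 0 := by
    rw [taylor_within_apply]
    exact Finset.sum_eq_zero fun i hi => by
      rw [hderiv i (Nat.lt_succ_iff.1 (Finset.mem_range.1 hi)), smul_zero]
  simpa only [hpoly, sub_zero, Metric.isOpen_ball.nhdsWithin_eq (Metric.mem_ball_self hδ)]
    using htaylor

theorem not_contDiffAt_of_mul_pow_le {c : ℝ} (hneg : ∀ s < 0, ψ s = 0) (hc : 0 < c)
    (hle : ∀ᶠ s in 𝓝[>] 0, c * s ^ k ≤ ψ s) : ¬ ContDiffAt ℝ k ψ 0 := fun hψ => by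
  have hsmall := ((isLittleO_pow_of_eq_zero_of_neg hψ hneg).def (half_pos hc)).filter_mono
    (nhdsWithin_le_nhds (s := Ioi 0))
  obtain ⟨s, ⟨hs, hcs⟩, hs₀⟩ := ((hsmall.and hle).and self_mem_nhdsWithin).exists
  have hpow : 0 < s ^ k := pow_pos hs₀ k
  rw [Real.norm_of_nonneg hpow.le] at hs
  linarith [hcs.trans ((le_abs_self _).trans hs), mul_pos hc hpow]

end FlatFunctions

section Singularity

variable {E : Type*} [NormedAddCommGroup E] [InnerProductSpace ℝ E]
variable {n p p' v y z : E} {L L' : Submodule ℝ E} {f g h k u u' φ : E → ℝ}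
variable {ε ε' s : ℝ}

theorem inner_pos_of_eventually_one_le (hn : n ≠ 0) (hu : ∀ q, ⟪n, q⟫_ℝ < 0 → u q = 0)
    (hp : ∀ᶠ q in 𝓝 p, 1 ≤ u q) : 0 < ⟪n, p⟫_ℝ := by
  obtain ⟨t, ht, hone⟩ := exists_pos_add_smul_mem hp (-n)
  have hnonneg : 0 ≤ ⟪n, p + t • -n⟫_ℝ := not_lt.1 fun hneg => by
    linarith [hu _ hneg, show (1 : ℝ) ≤ u _ from hone]
  rw [inner_add_right, inner_smul_right, inner_neg_right] at hnonneg
  linarith [mul_pos ht (real_inner_self_pos.2 hn)]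

theorem mul_apply_sub_of_smul_invariant (hu : ∀ c : ℝ, 0 < c → ∀ q, u (c • q) = u q)
    (hu' : ∀ c : ℝ, 0 < c → ∀ q, u' (c • q) = u' q) (huL : InvariantUnder u L)
    (hu'L : InvariantUnder u' L') (hy : y ∈ L) (hz : z ∈ L') (hs : 0 < s) (q : E) :
    u (y + s • q) * u' (y + z + s • v - (y + s • q)) = u q * u' (v - q) := by
  have hsub : y + z + s • v - (y + s • q) = s • (v - q) + z := by module
  rw [hsub, add_comm y, huL _ y hy, hu'L _ z hz, hu s hs, hu' s hs]

theorem IsCutoff.comp_add_smul (hφ : IsCutoff φ) (y : E) (hs : s ≠ 0) :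
    IsCutoff fun q => φ (y + s • q) where
  smooth := hφ.smooth.comp (by fun_prop)
  hasCompactSupport := (hφ.hasCompactSupport.comp_homeomorph (Homeomorph.addLeft y)).comp_smul hs
  nonneg _ := hφ.nonneg _

theorem eventually_forall_mem_ball_eq_one (hφ : φ =ᶠ[𝓝 y] 1) (p : E) (ρ : ℝ) :
    ∀ᶠ s : ℝ in 𝓝[>] 0, ∀ q ∈ Metric.ball p ρ, φ (y + s • q) = 1 := by
  have hnhds : {v | φ (y + v) = 1} ∈ 𝓝 (0 : E) :=
    ((continuous_const.add continuous_id).tendsto' 0 y (add_zero y)).eventually hφ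
  have habsorb := NormedSpace.isVonNBounded_of_isBounded ℝ (Metric.isBounded_ball (x := p) (r := ρ))
    hnhds
  exact habsorb.eventually_nhdsNE_zero.filter_mono (nhdsWithin_mono 0 fun _ hs => ne_of_gt hs)

variable [FiniteDimensional ℝ E]

theorem exists_cutoff_eventuallyEq_one {U : Set E} (hU : U ∈ 𝓝 y) :
    ∃ φ, IsCutoff φ ∧ tsupport φ ⊆ U ∧ φ =ᶠ[𝓝 y] 1 ∧ ∀ p, φ p ≤ 1 := by
  obtain ⟨R, hR, hRU⟩ := Metric.nhds_basis_closedBall.mem_iff.1 hU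
  let φ : ContDiffBump y := ⟨R / 2, R, half_pos hR, half_lt_self hR⟩
  exact ⟨φ, ⟨φ.contDiff, φ.hasCompactSupport, fun _ => φ.nonneg⟩, φ.tsupport_eq.trans_subset hRU,
    φ.eventuallyEq_one, fun _ => φ.le_one⟩

variable [MeasurableSpace E] [BorelSpace E]

theorem localConv_add_smul (hu : ∀ c : ℝ, 0 < c → ∀ q, u (c • q) = u q)
    (hu' : ∀ c : ℝ, 0 < c → ∀ q, u' (c • q) = u' q) (huL : InvariantUnder u L)
    (hu'L : InvariantUnder u' L') (hy : y ∈ L) (hz : z ∈ L') (hs : 0 < s) (φ : E → ℝ) (v : E) :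
    localConv φ u u' (y + z + s • v) =
      s ^ finrank ℝ E * localConv (fun q => φ (y + s • q)) u u' v := by
  have hint := Measure.integral_comp_smul_of_nonneg volume
    (fun q => φ (y + q) * (u (y + q) * u' (y + z + s • v - (y + q)))) s (hR := hs.le)
  simp only [mul_apply_sub_of_smul_invariant hu hu' huL hu'L hy hz hs] at hint
  rw [localConv, localConv, hint, smul_eq_mul, mul_inv_cancel_left₀ (pow_ne_zero _ hs.ne'),
    integral_add_left_eq_self (fun q => φ q * (u q * u' (y + z + s • v - q))) y]

theorem exists_eventually_mul_pow_le_localConv (hub : IsConicBump u) (hub' : IsConicBump u')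
    (hu : MemLp u ∞) (hu' : MemLp u' ∞) (hu₀ : ∀ q, 0 ≤ u q) (hu'₀ : ∀ q, 0 ≤ u' q)
    (huL : InvariantUnder u L) (hu'L : InvariantUnder u' L') (hy : y ∈ L) (hz : z ∈ L')
    (hφ : IsCutoff φ) (hφy : φ =ᶠ[𝓝 y] 1) (hp : ∀ᶠ q in 𝓝 p, 1 ≤ u q)
    (hp' : ∀ᶠ q in 𝓝 p', 1 ≤ u' q) : ∃ c > 0, ∀ᶠ s : ℝ in 𝓝[>] 0,
      c * s ^ finrank ℝ E ≤ localConv φ u u' (y + z + s • (p + p')) := by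
  have hsub : Filter.Tendsto (fun q => p + p' - q) (𝓝 p) (𝓝 p') :=
    (continuous_const.sub continuous_id).tendsto' p p' (add_sub_cancel_left p p')
  obtain ⟨ρ, hρ, hball⟩ := Metric.eventually_nhds_iff_ball.1 (hp.and (hsub.eventually hp'))
  have hball_lt : volume (Metric.ball p ρ) ≠ ⊤ := measure_ball_lt_top.ne
  refine ⟨volume.real (Metric.ball p ρ),
    ENNReal.toReal_pos (Metric.measure_ball_pos _ _ hρ).ne' hball_lt, ?_⟩
  filter_upwards [eventually_forall_mem_ball_eq_one hφy p ρ, self_mem_nhdsWithin] with s hsφ hs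
  rw [localConv_add_smul hub.smul hub'.smul huL hu'L hy hz hs, mul_comm]
  refine mul_le_mul_of_nonneg_left ?_ (pow_nonneg (le_of_lt hs) _)
  rw [← integral_indicator_one measurableSet_ball]
  refine integral_mono ((integrable_indicator_iff measurableSet_ball).2
    (integrableOn_const hball_lt))
    (integrable_localConv (hφ.comp_add_smul y (ne_of_gt hs)) hu hu' (p + p')) fun q => ?_
  by_cases hq : q ∈ Metric.ball p ρ
  · simp only [indicator_of_mem hq, hsφ q hq, one_mul]
    exact one_le_mul_of_one_le_of_one_le (hball q hq).1 (hball q hq).2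
  · rw [indicator_of_notMem hq]
    exact mul_nonneg (hφ.nonneg _) (mul_nonneg (hu₀ q) (hu'₀ _))

theorem eventually_integrable_mul {K : Set E} {x₀ : E} (hf : MemLp f ∞) (hh : MemLp h ∞)
    (hK : IsCompact K) (hsupp : ∀ᶠ x in 𝓝 x₀, ∀ q, f q * h (x - q) ≠ 0 → q ∈ K) :
    ∀ᶠ x in 𝓝 x₀, Integrable fun q => f q * h (x - q) := by
  filter_upwards [hsupp] with x hx
  rw [← integrableOn_iff_integrable_of_support_subset hx]
  have hfh : MemLp (fun q => f q * h (x - q)) ∞ := (memLp_top_comp_sub_left hh x).mul' hf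
  have : IsFiniteMeasure (volume.restrict K) := ⟨by simpa using hK.measure_lt_top⟩
  exact (hfh.restrict K).integrable le_top

theorem localConv_add_one_sub (hφ : IsCutoff φ) (hf : MemLp f ∞) (hh : MemLp h ∞) {x : E}
    (hint : Integrable fun q => f q * h (x - q)) :
    localConv φ f h x + localConv (1 - φ) f h x = localConv 1 f h x := by
  have hφint := integrable_localConv hφ hf hh x
  have hsplit (q : E) : (1 - φ) q * (f q * h (x - q)) =
      f q * h (x - q) - φ q * (f q * h (x - q)) := sub_mul 1 (φ q) _ |>.trans (by rw [one_mul])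
  simp only [localConv, hsplit, Pi.one_apply, one_mul]
  rw [integral_sub hint hφint, add_sub_cancel]

theorem HasOneSidedPart.exists_contDiffAt_localConv_sub {K : Set E} (hf : MemLp f ∞)
    (hh : MemLp h ∞) (hK : IsCompact K)
    (hsupp : ∀ᶠ x in 𝓝 (y + z), ∀ q, f q * h (x - q) ≠ 0 → q ∈ K)
    (hloc : ∀ q, LocallyOneSided (ε * ε') n f h q (y + z - q)) (hfg : f =ᶠ[𝓝 y] g)
    (hhk : h =ᶠ[𝓝 z] k) (hg : HasOneSidedPart n ε L g u) (hk : HasOneSidedPart n ε' L' k u')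
    (hLL' : (ℝ ∙ n)ᗮ ≤ L ⊔ L') :
    ∃ φ G, IsCutoff φ ∧ φ =ᶠ[𝓝 y] 1 ∧ (∀ x, 0 ≤ G x) ∧ (∀ x, ⟪n, x⟫_ℝ < 0 → G x = 0) ∧
      ContDiffAt ℝ ∞ (localConv 1 f h - (ε * ε') • (localConv φ u u' + G)) (y + z) := by
  obtain ⟨U, hU, hUφ⟩ := exists_nhds_localConv_eventuallyEq hfg hhk
  obtain ⟨φ, hφ, hφU, hφy, hφ₁⟩ := exists_cutoff_eventuallyEq_one hU
  obtain ⟨G, hG₀, hGn, hG⟩ := _root_.localConv_mem_oneSided hf hh hK hsupp hloc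
    (χ := 1 - φ) (contDiff_const.sub hφ.smooth) fun p => sub_nonneg.2 (hφ₁ p)
  refine ⟨φ, G, hφ, hφy, hG₀, hGn, ?_⟩
  refine ((hg.contDiff_localConv_sub hk hLL' hφ).contDiffAt.add hG).congr_of_eventuallyEq ?_
  filter_upwards [eventually_integrable_mul hf hh hK hsupp, hUφ φ hφU] with x hint hx
  simp only [Pi.sub_apply, Pi.add_apply, Pi.smul_apply, ← hx, smul_add,
    ← localConv_add_one_sub hφ hf hh hint]
  abel

theorem HasOneSidedPart.not_contDiffAt_localConv {K : Set E} (hn : n ≠ 0) (hf : MemLp f ∞)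
    (hh : MemLp h ∞) (hK : IsCompact K)
    (hsupp : ∀ᶠ x in 𝓝 (y + z), ∀ q, f q * h (x - q) ≠ 0 → q ∈ K)
    (hloc : ∀ q, LocallyOneSided (ε * ε') n f h q (y + z - q)) (hfg : f =ᶠ[𝓝 y] g)
    (hhk : h =ᶠ[𝓝 z] k) (hg : HasOneSidedPart n ε L g u) (hk : HasOneSidedPart n ε' L' k u')
    (hub : IsConicBump u) (hub' : IsConicBump u') (hLL' : (ℝ ∙ n)ᗮ ≤ L ⊔ L') (hy : y ∈ L)
    (hz : z ∈ L') (hyz : y + z ∈ (ℝ ∙ n)ᗮ) (hε : ε * ε' ≠ 0) :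
    ¬ ContDiffAt ℝ (finrank ℝ E) (localConv 1 f h) (y + z) := fun hfh => by
  obtain ⟨φ, G, hφ, hφy, hG₀, hGn, hsub⟩ :=
    hg.exists_contDiffAt_localConv_sub hf hh hK hsupp hloc hfg hhk hk hLL'
  obtain ⟨p, hp⟩ := hub.exists_eventually_one_le
  obtain ⟨p', hp'⟩ := hub'.exists_eventually_one_le
  obtain ⟨c, hc, hle⟩ := exists_eventually_mul_pow_le_localConv hub hub' hg.memLp hk.memLp
    hg.nonneg hk.nonneg hg.invariant hk.invariant hy hz hφ hφy hp hp'
  have hsmooth : ContDiffAt ℝ (finrank ℝ E) (localConv φ u u' + G) (y + z) := by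
    have hdiff := (hfh.sub (hsub.of_le (mod_cast le_top))).const_smul (ε * ε')⁻¹
    simpa only [Pi.sub_apply, Pi.smul_apply, sub_sub_cancel, inv_smul_smul₀ hε] using hdiff
  refine not_contDiffAt_of_mul_pow_le
    (ψ := fun s => (localConv φ u u' + G) (y + z + s • (p + p'))) (fun s hs => ?_) hc
    (hle.mono fun s hs => hs.trans (le_add_of_nonneg_right (hG₀ _))) ?_
  · have hneg : ⟪n, y + z + s • (p + p')⟫_ℝ < 0 := by
      rw [inner_add_right n (y + z), mem_orthogonal_singleton_iff_inner_right.1 hyz, zero_add,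
        inner_smul_right, inner_add_right]
      exact mul_neg_of_neg_of_pos hs <| add_pos
        (inner_pos_of_eventually_one_le hn hg.eq_zero hp)
        (inner_pos_of_eventually_one_le hn hk.eq_zero hp')
    rw [Pi.add_apply, hGn _ hneg, localConv_eq_zero_of_inner_neg hg.eq_zero hk.eq_zero hneg,
      add_zero]
  · exact ContDiffAt.comp (g := localConv φ u u' + G) 0 (by simpa using hsmooth) (by fun_prop)

end Singularity

section ConeDifference

variable {E : Type*} [NormedAddCommGroup E] [InnerProductSpace ℝ E]
variable {S T : Finset E} {e w w' x : E} {η : ℝ}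

theorem mem_of_coneDifference_ne_zero {κ : ℝ} {p : E} (hw : w ∈ polyhedralCone S)
    (hp : coneDifference S κ w p ≠ 0) : p ∈ polyhedralCone S := by
  contrapose! hp
  exact (coneDifference_eventuallyEq_zero hw hp).self_of_nhds

variable [FiniteDimensional ℝ E] [MeasurableSpace E] [BorelSpace E]

theorem integrable_coneIndicator_sub_mul (hS : IsSolidAbove e S) (hT : IsSolidAbove e T)
    (x w w' : E) : Integrable fun p => coneIndicator S (p - w) * coneIndicator T (x - p - w') := by
  obtain ⟨R, hR⟩ := hS.eventually_mem_closedBall hT (x - w' - w)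
  have hint := (eventually_integrable_mul (memLp_coneIndicator S) (memLp_coneIndicator T)
    (isCompact_closedBall 0 R) (hR.mono fun _ h p hp => h p
      (mem_of_coneIndicator_ne_zero (left_ne_zero_of_mul hp))
      (mem_of_coneIndicator_ne_zero (right_ne_zero_of_mul hp)))).self_of_nhds
  refine (hint.comp_sub_right w).congr (.of_forall fun p => ?_)
  simp only [sub_sub_sub_cancel_right, sub_right_comm x w' p]

theorem integral_coneIndicator_sub_mul (S T : Finset E) (x w w' : E) :
    ∫ p, coneIndicator S (p - w) * coneIndicator T (x - p - w') =
      localConv 1 (coneIndicator S) (coneIndicator T) (x - w' - w) := by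
  rw [localConv, ← integral_add_right_eq_self _ w]
  simp only [Pi.one_apply, one_mul, add_sub_cancel_right, ← sub_sub, sub_right_comm]

theorem localConv_coneDifference (hS : IsSolidAbove e S) (hT : IsSolidAbove e T) (κ κ' : ℝ)
    (w w' x : E) : localConv 1 (coneDifference S κ w) (coneDifference T κ' w') x =
      localConv 1 (coneIndicator S) (coneIndicator T) x -
        κ' * localConv 1 (coneIndicator S) (coneIndicator T) (x - w') -
        κ * (localConv 1 (coneIndicator S) (coneIndicator T) (x - w) -
          κ' * localConv 1 (coneIndicator S) (coneIndicator T) (x - w' - w)) := by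
  have hint := integrable_coneIndicator_sub_mul hS hT x
  have hint_sub (v : E) : Integrable fun p =>
      coneIndicator S (p - v) * coneIndicator T (x - p - 0) - κ' *
        (coneIndicator S (p - v) * coneIndicator T (x - p - w')) :=
    (hint v 0).sub ((hint v w').const_mul κ')
  have hexpand (p : E) : coneDifference S κ w p * coneDifference T κ' w' (x - p) =
      coneIndicator S (p - 0) * coneIndicator T (x - p - 0) -
        κ' * (coneIndicator S (p - 0) * coneIndicator T (x - p - w')) -
        κ * (coneIndicator S (p - w) * coneIndicator T (x - p - 0) -
          κ' * (coneIndicator S (p - w) * coneIndicator T (x - p - w'))) := by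
    simp only [coneDifference, sub_zero]
    ring
  rw [localConv]
  simp only [Pi.one_apply, one_mul, hexpand]
  rw [integral_sub (hint_sub 0) ((hint_sub w).const_mul κ), integral_const_mul,
    integral_sub (hint 0 0) ((hint 0 w').const_mul κ'), integral_const_mul,
    integral_sub (hint w 0) ((hint w w').const_mul κ'), integral_const_mul]
  simp only [integral_coneIndicator_sub_mul]
  simp only [sub_zero]

theorem contDiffAt_localConv_coneDifference (hS : IsSolidAbove e S) (hT : IsSolidAbove e T)
    {k : WithTop ℕ∞} (κ κ' : ℝ) (hw : ‖w‖ ≤ η) (hw' : ‖w'‖ ≤ η)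
    (h : ∀ v, ‖v‖ ≤ η + η →
      ContDiffAt ℝ k (localConv 1 (coneIndicator S) (coneIndicator T)) (x - v)) :
    ContDiffAt ℝ k (localConv 1 (coneDifference S κ w) (coneDifference T κ' w')) x := by
  have hη : 0 ≤ η := (norm_nonneg w).trans hw
  have hshift (v : E) (hv : ‖v‖ ≤ η + η) : ContDiffAt ℝ k
      (fun y => localConv 1 (coneIndicator S) (coneIndicator T) (y - v)) x :=
    ContDiffAt.comp (g := localConv 1 (coneIndicator S) (coneIndicator T)) x (h v hv) (by fun_prop)
  have hww' := hshift (w' + w) ((norm_add_le w' w).trans (add_le_add hw' hw))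
  simp only [← sub_sub] at hww'
  have h₀ := hshift 0 (by simpa using add_nonneg hη hη)
  simp only [sub_zero] at h₀
  rw [funext (localConv_coneDifference hS hT κ κ' w w')]
  exact (h₀.sub (contDiffAt_const.mul (hshift w' (by linarith)))).sub
    (contDiffAt_const.mul ((hshift w (by linarith)).sub (contDiffAt_const.mul hww')))

end ConeDifference

section EdgeSums

variable {E : Type*} [NormedAddCommGroup E] [InnerProductSpace ℝ E] [Fact (finrank ℝ E = 3)]
variable {S T : Finset E} {e n r s t y z : E} {ρ τ η : ℝ}

theorem IsSolidAbove.exists_isEdgeDirection_inner_eq_zero (hS : IsSolidAbove e S)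
    (hy : y ∈ polyhedralCone S) (hy₀ : y ≠ 0) (hs : s ∈ activeNormals S y) (hs₀ : s ≠ 0) :
    ∃ r, IsEdgeDirection S r ∧ ⟪s, r⟫_ℝ = 0 := by
  have : FiniteDimensional ℝ E := .of_fact_finrank_eq_succ 2
  have hsy : y ∈ (ℝ ∙ s)ᗮ :=
    mem_orthogonal_singleton_iff_inner_right.2 (mem_activeNormals.1 hs).2
  obtain ⟨v, hv₀, hv⟩ := exists_ne_zero_le_orthogonal (span_pair_ne_top e s)
  have hev : ⟪e, v⟫_ℝ = 0 :=
    mem_orthogonal_singleton_iff_inner_left.1 (hv (subset_span (mem_insert e {s})))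
  have hsv : ⟪s, v⟫_ℝ = 0 :=
    mem_orthogonal_singleton_iff_inner_left.1 (hv (subset_span (mem_insert_of_mem e rfl)))
  have hvS : v ∉ polyhedralCone S := fun h => (hS.inner_pos v h hv₀).ne' hev
  obtain ⟨δ, hδ, hvy⟩ :=
    exists_pos_add_smul_mem ((isClosed_polyhedralCone S).isOpen_compl.mem_nhds hvS) y
  have hexit : y + (y + (2 / δ) • v) ∉ polyhedralCone S := fun h => hvy <| by
    convert smul_mem_polyhedralCone h (half_pos hδ).le using 1
    match_scalars <;> field_simp
    norm_num
  obtain ⟨l, -, hl⟩ := hS.exists_isEdgeDirection_add_smul (z := y + (2 / δ) • v) hs₀ hy hy₀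
    (fun u hu => mem_orthogonal_singleton_iff_inner_right.2 (mem_linealitySpace.1 hu s hs))
    (add_mem hsy (smul_mem _ _ (mem_orthogonal_singleton_iff_inner_right.2 hsv)))
    (by simpa [inner_add_right, inner_smul_right, hev] using hS.inner_pos y hy hy₀)
    fun h => hexit ((isClosed_polyhedralCone S).frontier_subset h)
  exact ⟨_, hl, by
    simp [inner_add_right, inner_smul_right, hsv, (mem_activeNormals.1 hs).2]⟩

theorem IsSolidAbove.exists_isEdgeDirection_notMem_span (hS : IsSolidAbove e S)
    (hr : IsEdgeDirection S r) : ∃ r', IsEdgeDirection S r' ∧ r' ∉ ℝ ∙ r := by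
  obtain ⟨p, hp⟩ := hS.exists_interior
  have her : 0 < ⟪e, r⟫_ℝ := hS.inner_pos r hr.mem hr.ne_zero
  -- Moving from the interior against the direction of `r` exits through a facet not containing `r`.
  obtain ⟨c, hc⟩ := exists_lt_nsmul her ⟪e, p⟫_ℝ
  obtain ⟨l, -, hmem, s, hs, hsr⟩ := exists_exit_of_add_notMem (z := -(c • r))
    (fun s hs => (hp s hs).le) fun h => (hS.inner_nonneg h).not_gt <| by
      simpa [inner_add_right, ← Nat.cast_smul_eq_nsmul ℝ, inner_smul_right] using hc
  have hsr₀ : ⟪s, r⟫_ℝ ≠ 0 := fun h => by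
    simp [← Nat.cast_smul_eq_nsmul ℝ, inner_smul_right, h] at hsr
  obtain ⟨r', hr', hsr'⟩ := hS.exists_isEdgeDirection_inner_eq_zero hmem
    (fun h => hr.notMem_span hp <| mem_span_singleton.2 ⟨l * c, by
      simp [eq_neg_of_add_eq_zero_left h, mul_smul, Nat.cast_smul_eq_nsmul]⟩)
    hs fun h => hsr₀ (by simp [h])
  refine ⟨r', hr', fun hmem => ?_⟩
  obtain ⟨d, rfl⟩ := mem_span_singleton.1 hmem
  rw [inner_smul_right, mul_eq_zero] at hsr'
  exact hr'.ne_zero (by rw [hsr'.resolve_right hsr₀, zero_smul])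

variable [FiniteDimensional ℝ E] [MeasurableSpace E] [BorelSpace E]

theorem IsGenericSum.exists_not_contDiffAt (hS : IsSolidAbove e S) (hT : IsSolidAbove e T)
    (hn : n ≠ 0) (hη : 0 < η) (hyz : IsGenericSum S T n η (y + z)) (hy : IsEdgeDirection S y)
    (hz : IsEdgeDirection T z) (hyn : y ∈ (ℝ ∙ n)ᗮ) :
    ∃ v, ‖v‖ ≤ η + η ∧
      ¬ ContDiffAt ℝ 3 (localConv 1 (coneIndicator S) (coneIndicator T)) (y + z - v) := by
  by_contra! h
  obtain ⟨κ, ε, w, hwS, hw, hε, hf⟩ := hS.exists_hasOneSidedGerms hn hη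
  obtain ⟨κ', ε', w', hwT, hw', hε', hf'⟩ := hT.exists_hasOneSidedGerms hn hη
  obtain ⟨g, u, hfg, hg, hu⟩ := hf.edge y hyn hy
  obtain ⟨g', u', hfg', hg', hu'⟩ := hf'.edge z (by simpa using sub_mem hyz.mem hyn) hz
  obtain ⟨R, hR⟩ := hS.eventually_mem_closedBall hT (y + z)
  have hε₀ : ε * ε' ≠ 0 := by rcases hε with rfl | rfl <;> rcases hε' with rfl | rfl <;> norm_num
  refine hg.not_contDiffAt_localConv hn hf.memLp hf'.memLp (isCompact_closedBall 0 R) ?_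
    (hf.locallyOneSided hS hT hf' hyz) hfg hfg' hg' hu hu' ?_ (self_mem_linealitySpace S y)
    (self_mem_linealitySpace T z) hyz.mem hε₀ ?_
  · exact hR.mono fun x hx p hp => hx p
      (mem_of_coneDifference_ne_zero hwS (left_ne_zero_of_mul hp))
      (mem_of_coneDifference_ne_zero hwT (right_ne_zero_of_mul hp))
  · exact hyz.orthogonal_le_sup y z rfl _
      (linealitySpace_activeNormals_mem_nearbyLinealitySpaces (by simpa using hη.le)) _
      (linealitySpace_activeNormals_mem_nearbyLinealitySpaces (by simpa using hη.le))
  · rw [(Fact.out : finrank ℝ E = 3)]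
    exact contDiffAt_localConv_coneDifference hS hT κ κ' hw hw' h

theorem not_contDiffAt_localConv_coneIndicator_of_notMem_span (hS : IsSolidAbove e S)
    (hT : IsSolidAbove e T) (hr : IsEdgeDirection S r) (ht : IsEdgeDirection T t)
    (htr : t ∉ ℝ ∙ r) (hρ : 0 ≤ ρ) (hτ : 0 ≤ τ) :
    ¬ ContDiffAt ℝ 3 (localConv 1 (coneIndicator S) (coneIndicator T)) (ρ • r + τ • t) := by
  intro h
  obtain ⟨n, hn, hle⟩ := exists_ne_zero_le_orthogonal (span_pair_ne_top r t)
  have hrt : span ℝ {r, t} = (ℝ ∙ n)ᗮ :=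
    (eq_span_singleton_or_eq_orthogonal hn hle (subset_span (by simp)) hr.ne_zero).resolve_left
      fun heq => htr (heq ▸ subset_span (by simp))
  have hrn : r ∈ (ℝ ∙ n)ᗮ := hle (subset_span (by simp))
  have htn : t ∈ (ℝ ∙ n)ᗮ := hle (subset_span (by simp))
  have hgeneric := eventually_isGenericSum S T (add_mem (smul_mem _ ρ hrn) (smul_mem _ τ htn)) hrt
  have hcurve : Filter.Tendsto (fun a : ℝ => ρ • r + τ • t + a • r + a ^ 2 • t) (𝓝[>] 0)
      (𝓝 (ρ • r + τ • t)) :=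
    (Continuous.tendsto' (by fun_prop) 0 _ (by simp)).mono_left nhdsWithin_le_nhds
  obtain ⟨a, ⟨hη, hsmooth⟩, ha⟩ := ((hgeneric.and
    (hcurve.eventually (h.eventually (by simp)).eventually_nhds)).and self_mem_nhdsWithin).exists
  obtain ⟨δ, hδ, hball⟩ := Metric.eventually_nhds_iff_ball.1 hsmooth
  obtain ⟨η, hη, hη₀, hηδ⟩ := (hη.and (Ioo_mem_nhdsGT (half_pos hδ))).exists
  have hsum : ρ • r + τ • t + a • r + a ^ 2 • t = (ρ + a) • r + (τ + a ^ 2) • t := by module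
  rw [hsum] at hη hball
  obtain ⟨v, hv, hnot⟩ := hη.exists_not_contDiffAt hS hT hn hη₀
    (hr.smul (add_pos_of_nonneg_of_pos hρ ha))
    (ht.smul (add_pos_of_nonneg_of_pos hτ (pow_pos ha 2))) (smul_mem _ _ hrn)
  refine hnot (hball _ ?_)
  rw [Metric.mem_ball, dist_self_sub_left]
  linarith

theorem not_contDiffAt_localConv_coneIndicator (hS : IsSolidAbove e S) (hT : IsSolidAbove e T)
    (hr : IsEdgeDirection S r) (ht : IsEdgeDirection T t) (hρ : 0 ≤ ρ) (hτ : 0 ≤ τ) :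
    ¬ ContDiffAt ℝ 3 (localConv 1 (coneIndicator S) (coneIndicator T)) (ρ • r + τ • t) := by
  by_cases htr : t ∈ ℝ ∙ r
  swap
  · exact not_contDiffAt_localConv_coneIndicator_of_notMem_span hS hT hr ht htr hρ hτ
  obtain ⟨c, rfl⟩ := mem_span_singleton.1 htr
  have hc : 0 < c := by
    have hpos := hT.inner_pos _ ht.mem ht.ne_zero
    rw [inner_smul_right] at hpos
    exact pos_of_mul_pos_left hpos (hS.inner_pos r hr.mem hr.ne_zero).le
  obtain ⟨r', hr', hr'r⟩ := hS.exists_isEdgeDirection_notMem_span hr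
  have hspan : c • r ∉ ℝ ∙ r' := fun h => by
    obtain ⟨d, hd⟩ := mem_span_singleton.1 h
    have hd₀ : d ≠ 0 := fun h => ht.ne_zero (by rw [← hd, h, zero_smul])
    exact hr'r ((Submodule.smul_mem_iff _ hd₀).1 (hd ▸ smul_mem _ c (mem_span_singleton_self r)))
  have hmain := not_contDiffAt_localConv_coneIndicator_of_notMem_span hS hT hr' ht hspan le_rfl
    (add_nonneg (div_nonneg hρ hc.le) hτ)
  rwa [zero_smul, zero_add, add_smul, smul_smul, div_mul_cancel₀ _ hc.ne'] at hmain

end EdgeSums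

section Euclidean

open scoped EuclideanSpace

variable {S T : Finset (EuclideanSpace ℝ (Fin 3))} {A B C R : Set (EuclideanSpace ℝ (Fin 3))}
  {e w x y : EuclideanSpace ℝ (Fin 3)}

theorem mem_exposedFace_polyhedralCone_iff (hw : ∀ x ∈ polyhedralCone S, ⟪w, x⟫_ℝ ≤ 0) :
    x ∈ exposedFace (polyhedralCone S) w ↔ x ∈ polyhedralCone S ∧ ⟪w, x⟫_ℝ = 0 := by
  refine and_congr_right fun hx => ⟨fun h => (hw x hx).antisymm ?_, fun h y hy => h ▸ hw y hy⟩
  simpa using h 0 (zero_mem_polyhedralCone S)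

theorem inner_nonpos_of_nonempty_exposedFace (h : (exposedFace (polyhedralCone S) w).Nonempty) :
    ∀ x ∈ polyhedralCone S, ⟪w, x⟫_ℝ ≤ 0 := fun x hx => by
  obtain ⟨y, hy, hmax⟩ := h
  simpa [inner_add_right] using hmax (y + x) (add_mem_polyhedralCone hy hx)

theorem vectorSpan_eq_span_of_zero_mem (h : 0 ∈ R) : vectorSpan ℝ R = span ℝ R := by
  simp [vectorSpan_eq_span_vsub_set_right ℝ h]

theorem isEdgeOf_polyhedralCone_iff : IsEdgeOf (polyhedralCone S) R ↔
    ∃ w ≠ 0, (∀ x ∈ polyhedralCone S, ⟪w, x⟫_ℝ ≤ 0) ∧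
      R = {x | x ∈ polyhedralCone S ∧ ⟪w, x⟫_ℝ = 0} ∧ finrank ℝ (span ℝ R) = 1 := by
  constructor
  · rintro ⟨⟨w, hw, rfl⟩, hrank⟩
    have hne : (exposedFace (polyhedralCone S) w).Nonempty := nonempty_iff_ne_empty.2 fun h => by
      rw [h, vectorSpan_empty, finrank_bot] at hrank
      exact zero_ne_one hrank
    have hw' := inner_nonpos_of_nonempty_exposedFace hne
    refine ⟨w, hw, hw', ext fun x => mem_exposedFace_polyhedralCone_iff hw', ?_⟩
    rwa [← vectorSpan_eq_span_of_zero_mem]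
    exact (mem_exposedFace_polyhedralCone_iff hw').2
      ⟨zero_mem_polyhedralCone S, inner_zero_right w⟩
  · rintro ⟨w, hw, hw', rfl, hrank⟩
    refine ⟨⟨w, hw, ext fun x => (mem_exposedFace_polyhedralCone_iff hw').symm⟩, ?_⟩
    rwa [vectorSpan_eq_span_of_zero_mem]
    exact ⟨zero_mem_polyhedralCone S, inner_zero_right w⟩

theorem IsSolidAbove.exists_isEdgeOf (hS : IsSolidAbove e S) (hy : IsEdgeDirection S y) :
    ∃ R, IsEdgeOf (polyhedralCone S) R ∧ y ∈ R := by
  set w := ∑ s ∈ activeNormals S y, s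
  have hinner (x) : ⟪w, x⟫_ℝ = ∑ s ∈ activeNormals S y, ⟪s, x⟫_ℝ := sum_inner _ _ _
  have hnonpos : ∀ x ∈ polyhedralCone S, ∀ s ∈ activeNormals S y, ⟪s, x⟫_ℝ ≤ 0 :=
    fun x hx s hs => hx s (mem_activeNormals.1 hs).1
  have hwy : ⟪w, y⟫_ℝ = 0 :=
    (hinner y).trans (Finset.sum_eq_zero fun s hs => (mem_activeNormals.1 hs).2)
  have hw₀ : w ≠ 0 := fun h => by
    obtain ⟨p, hp⟩ := hS.exists_interior
    obtain ⟨s, hs⟩ := hy.exists_mem_activeNormals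
    have hwp := Finset.sum_neg (fun s hs => hp s (mem_activeNormals.1 hs).1) ⟨s, hs⟩
    rw [← hinner p, h, inner_zero_left] at hwp
    exact hwp.false
  refine ⟨{x | x ∈ polyhedralCone S ∧ ⟪w, x⟫_ℝ = 0}, isEdgeOf_polyhedralCone_iff.2
    ⟨w, hw₀, fun x hx => (hinner x).trans_le (Finset.sum_nonpos (hnonpos x hx)), rfl, ?_⟩,
    hy.mem, hwy⟩
  have hspan : span ℝ {x | x ∈ polyhedralCone S ∧ ⟪w, x⟫_ℝ = 0} = ℝ ∙ y := by
    refine le_antisymm (span_le.2 fun x ⟨hx, hwx⟩ => ?_)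
      ((span_singleton_le_iff_mem _ _).2 (subset_span ⟨hy.mem, hwy⟩))
    rw [hinner, Finset.sum_eq_zero_iff_of_nonpos (hnonpos x hx)] at hwx
    rw [← hy.linealitySpace_eq]
    exact mem_linealitySpace.2 hwx
  rw [hspan, finrank_span_singleton hy.ne_zero]

theorem IsSolidAbove.exists_isEdgeDirection_of_isEdgeOf (hS : IsSolidAbove e S)
    (hR : IsEdgeOf (polyhedralCone S) R) :
    ∃ r, IsEdgeDirection S r ∧ ∀ x ∈ R, ∃ c : ℝ, 0 ≤ c ∧ c • r = x := by
  obtain ⟨w, -, hw, rfl, hrank⟩ := isEdgeOf_polyhedralCone_iff.1 hR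
  set R := {x | x ∈ polyhedralCone S ∧ ⟪w, x⟫_ℝ = 0}
  obtain ⟨r, hr, hr₀⟩ : ∃ r ∈ R, r ≠ 0 := by
    by_contra! h
    rw [span_eq_bot.2 h, finrank_bot] at hrank
    exact zero_ne_one hrank
  have hspan : ℝ ∙ r = span ℝ R := eq_of_le_of_finrank_eq
    (span_mono (singleton_subset_iff.2 hr)) ((finrank_span_singleton hr₀).trans hrank.symm)
  refine ⟨r, ⟨hr.1, hr₀, le_antisymm ?_ ?_⟩, fun x hx => ?_⟩
  · exact hspan ▸ linealitySpace_activeNormals_le_span hw hr.1 hr.2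
  · exact (span_singleton_le_iff_mem _ _).2 (self_mem_linealitySpace S r)
  · obtain ⟨c, rfl⟩ := mem_span_singleton.1 (hspan ▸ subset_span hx)
    refine ⟨c, ?_, rfl⟩
    have hc := hS.inner_nonneg hx.1
    rw [inner_smul_right] at hc
    exact nonneg_of_mul_nonneg_left hc (hS.inner_pos r hr.1 hr₀)

theorem IsPolyhedralCone.exists_isSolidAbove (hA : IsPolyhedralCone A)
    (hint : (interior A).Nonempty) (hup : A ⊆ {x | 0 ≤ x 2}) (h₀ : A ∩ {x | x 2 = 0} = {0}) :
    ∃ S, A = polyhedralCone S ∧ IsSolidAbove (EuclideanSpace.single 2 1) S := by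
  classical
  obtain ⟨S, rfl⟩ := hA
  have herase : {x | ∀ s ∈ S, ⟪s, x⟫_ℝ ≤ 0} = polyhedralCone (S.erase 0) := by
    ext x
    refine ⟨fun h s hs => h s (Finset.mem_of_mem_erase hs), fun h s hs => ?_⟩
    rcases eq_or_ne s 0 with rfl | hs₀
    · exact (inner_zero_left x).le
    · exact h s (Finset.mem_erase.2 ⟨hs₀, hs⟩)
  rw [herase] at hint hup h₀
  refine ⟨S.erase 0, herase, ?_, fun x hx hx₀ => ?_⟩
  · obtain ⟨p, hp⟩ := hint
    refine ⟨p, fun s hs => ?_⟩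
    obtain ⟨t, ht, hmem⟩ := exists_pos_add_smul_mem (mem_interior_iff_mem_nhds.1 hp) s
    have hle := hmem s hs
    rw [inner_add_right, inner_smul_right] at hle
    linarith [mul_pos ht (real_inner_self_pos.2 (Finset.ne_of_mem_erase hs))]
  · rw [EuclideanSpace.inner_single_left, map_one, one_mul]
    exact (hup hx).lt_of_ne fun h => hx₀ (h₀.le ⟨hx, h.symm⟩)

theorem IsPolyhedralCone.exists_isSolidAbove_neg (hB : IsPolyhedralCone B)
    (hint : (interior B).Nonempty) (hdown : -B ⊆ {x | 0 ≤ x 2}) (h₀ : B ∩ {x | x 2 = 0} = {0}) :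
    ∃ T, B = -polyhedralCone T ∧ IsSolidAbove (EuclideanSpace.single 2 1) T := by
  classical
  have hneg : IsPolyhedralCone (-B) := by
    obtain ⟨S, rfl⟩ := hB
    exact ⟨S.image fun s => -s, by ext x; simp⟩
  have hneg₀ : -B ∩ {x | x 2 = 0} = {0} := by
    simpa [Set.ext_iff, neg_eq_zero] using fun x => Set.ext_iff.1 h₀ (-x)
  obtain ⟨T, hBT, hT⟩ := hneg.exists_isSolidAbove
    ((Homeomorph.neg _).preimage_interior B ▸ hint.neg) hdown hneg₀
  exact ⟨T, by rw [← hBT, neg_neg], hT⟩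

theorem crossCovariogram_neg (hA : IsClosed A) (hC : IsClosed C) :
    crossCovariogram A (-C) = localConv 1 (A.indicator 1) (C.indicator 1) := by
  ext x
  have himage : (x + ·) '' (-C) = (x - ·) ⁻¹' C := by
    ext p
    simp [image_add_left, sub_eq_add_neg, add_comm]
  have hmeas : MeasurableSet (A ∩ (x - ·) ⁻¹' C) :=
    hA.measurableSet.inter (hC.preimage (by fun_prop)).measurableSet
  rw [crossCovariogram, himage, ← Measure.real, ← integral_indicator_one hmeas]
  simp only [inter_indicator_one, Pi.mul_apply, localConv, Pi.one_apply, one_mul]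
  rfl

theorem isC3At_iff_contDiffAt {f : EuclideanSpace ℝ (Fin 3) → ℝ} :
    IsC3At f x ↔ ContDiffAt ℝ 3 f x := by
  refine ⟨fun ⟨U, hU, hf⟩ => hf.contDiffAt hU, fun hf => ?_⟩
  obtain ⟨U, hU, hf'⟩ := hf.contDiffOn (m := 3) le_rfl (by simp)
  exact ⟨U, by simpa using hU, hf'⟩

theorem closure_setOf_not_isC3At_crossCovariogram (S T : Finset (EuclideanSpace ℝ (Fin 3))) :
    closure {x | ¬ IsC3At (crossCovariogram (polyhedralCone S) (-polyhedralCone T)) x} =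
      {x | ¬ ContDiffAt ℝ 3 (localConv 1 (coneIndicator S) (coneIndicator T)) x} := by
  have hopen : IsOpen {x | ContDiffAt ℝ 3 (localConv 1 (coneIndicator S) (coneIndicator T)) x} :=
    isOpen_iff_eventually.2 fun _ hx => (mem_ofPred.1 hx).eventually (by simp)
  simp only [isC3At_iff_contDiffAt, crossCovariogram_neg (isClosed_polyhedralCone S)
    (isClosed_polyhedralCone T)]
  exact hopen.isClosed_compl.closure_eq

theorem edgeSums_subset (hS : IsSolidAbove e S) (hT : IsSolidAbove e T) :
    edgeSums S T ⊆ {x | ∃ R R', IsEdgeOf (polyhedralCone S) R ∧ IsEdgeOf (polyhedralCone T) R' ∧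
      x ∈ R + R'} := by
  rintro _ ⟨r, t, hr, ht, rfl⟩
  obtain ⟨R, hR, hrR⟩ := hS.exists_isEdgeOf hr
  obtain ⟨R', hR', htR'⟩ := hT.exists_isEdgeOf ht
  exact ⟨R, R', hR, hR', add_mem_add hrR htR'⟩

end Euclidean

/-- The set of `C³`-discontinuities of the cross covariogram of two convex polyhedral
cones `A`, `B` contains the Minkowski sums of the edges of `A` and of `−B`, and is
contained in the union of `∂A`, `−∂B` and these Minkowski sums. -/
theorem C3_discontinuities_of_crossCovariogram
    (A B : Set (EuclideanSpace ℝ (Fin 3)))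
    (hA : IsPolyhedralCone A) (hB : IsPolyhedralCone B)
    (hAint : (interior A).Nonempty) (hBint : (interior B).Nonempty)
    (hAup : A ⊆ {x | 0 ≤ x 2}) (hBdown : -B ⊆ {x | 0 ≤ x 2})
    (hA0 : A ∩ {x | x 2 = 0} = {0}) (hB0 : B ∩ {x | x 2 = 0} = {0})
    (S3 E : Set (EuclideanSpace ℝ (Fin 3)))
    (hS3 : S3 = closure {x | ¬IsC3At (crossCovariogram A B) x})
    (hE : E = {x | ∃ R T : Set (EuclideanSpace ℝ (Fin 3)),
      IsEdgeOf A R ∧ IsEdgeOf (-B) T ∧ x ∈ R + T}) :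
    E ⊆ S3 ∧ S3 ⊆ frontier A ∪ (-frontier B) ∪ E := by
  obtain ⟨S, rfl, hS⟩ := hA.exists_isSolidAbove hAint hAup hA0
  obtain ⟨T, rfl, hT⟩ := hB.exists_isSolidAbove_neg hBint hBdown hB0
  rw [closure_setOf_not_isC3At_crossCovariogram] at hS3
  rw [neg_neg] at hE
  have hfrontier : -frontier (-polyhedralCone T) = frontier (polyhedralCone T) := by
    simpa using (Homeomorph.neg _).preimage_frontier (-polyhedralCone T)
  have : Fact (finrank ℝ (EuclideanSpace ℝ (Fin 3)) = 3) := ⟨finrank_euclideanSpace_fin⟩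
  subst hS3 hE
  constructor
  · rintro _ ⟨R, R', hR, hR', x, hx, y, hy, rfl⟩
    obtain ⟨r, hr, hRr⟩ := hS.exists_isEdgeDirection_of_isEdgeOf hR
    obtain ⟨t, ht, hRt⟩ := hT.exists_isEdgeDirection_of_isEdgeOf hR'
    obtain ⟨ρ, hρ, rfl⟩ := hRr x hx
    obtain ⟨τ, hτ, rfl⟩ := hRt y hy
    exact not_contDiffAt_localConv_coneIndicator hS hT hr ht hρ hτ
  · intro x hx
    rw [hfrontier]
    by_contra! h
    simp only [mem_union, not_or] at h
    exact hx ((contDiffAt_localConv_coneIndicator hS hT h.1.1 h.1.2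
      fun hedge => h.2 (edgeSums_subset hS hT hedge)).of_le ENat.LEInfty.out)
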